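/- Fix an odd integer p ≥ 5, let R₀ > 0 and C₀ > 0. Let u be an exterior solution on {r > R₀ + |t|} with data (u₀, u₁) ∈ H(R₀) such that for every ρ ≥ R₀ one has ‖u‖_{L²L⁸(ρ)} + ‖u‖_{L³L⁶(ρ)} + sup_{t∈ℝ} ‖(u(t,·), ∂_t u(t,·))‖_{H(ρ+|t|)} ≤ C₀‖(u(0,·),∂_t u(0,·))‖_{H(ρ)}, and such that the exterior energy of u vanishes. Then at least one of the following holds: (a) there exist t₀ ∈ ℝ and R > R₀ such that u(t₀, r) = 0 for all r > |t₀| + R; or (b) there exist ℓ ∈ ℝ \ {0}, R > R₀, and a C² function Z : (0,∞) → ℝ satisfying Z''(r) + (3/r)Z'(r) + |Z(r)|^{p−1}Z(r) = 0 for all r > 0 together with |r²Z(r) − ℓ| ≤ C·r^{4−2p} for some C > 0 and all sufficiently large r, such that u₀(r) = Z(r) and u₁(r) = 0 for all r > R. -/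

import Mathlib

open MeasureTheory Filter Set
open scoped ENNReal
/-- The exterior energy norm `‖(v,w)‖_{H(R)} = (∫_R^∞ (|v'|² + |w|²) r³ dr)^{1/2}`. -/
noncomputable def eH (R : ℝ) (v w : ℝ → ℝ) : ℝ≥0∞ :=
  ((∫⁻ r in Ioi R, ENNReal.ofReal ((deriv v r) ^ 2 * r ^ 3)) +
      ∫⁻ r in Ioi R, ENNReal.ofReal ((w r) ^ 2 * r ^ 3)) ^ (1 / 2 : ℝ)

/-- The exterior spacetime norm `‖u‖_{L^aL^b(R)}` over the region `{r > R + |t|}`. -/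
noncomputable def eLL (a b R : ℝ) (u : ℝ → ℝ → ℝ) : ℝ≥0∞ :=
  (∫⁻ t : ℝ,
      (∫⁻ r in Ioi (R + |t|), ENNReal.ofReal (|u t r| ^ b * r ^ 3)) ^ (a / b)) ^ (1 / a)

/-- The time derivative `∂_t u` of a function of `(t,r)`. -/
noncomputable def dtu (u : ℝ → ℝ → ℝ) (t r : ℝ) : ℝ := deriv (fun s => u s r) t

/-- `u` is an exterior solution of `∂_t²u - ∂_r²u - (3/r)∂_r u = |u|^{p-1}u`
on `{r > R + |t|}`, of smoothness class `C^n`. -/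
def IsExtSol (p : ℕ) (n : ℕ∞) (R : ℝ) (u : ℝ → ℝ → ℝ) : Prop :=
  ContDiffOn ℝ n (fun q : ℝ × ℝ => u q.1 q.2) {q : ℝ × ℝ | R + |q.1| < q.2} ∧
  ∀ t r : ℝ, R + |t| < r →
    deriv (fun s => dtu u s r) t - deriv (deriv (u t)) r - (3 / r) * deriv (u t) r
      = |u t r| ^ (p - 1) * u t r

/-- The exterior energy of `u` outside `{r > R + |t|}` vanishes as `t → ±∞`. -/
def ExtEnergyVanishes (R : ℝ) (u : ℝ → ℝ → ℝ) : Prop :=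
  Tendsto (fun t : ℝ => ∫ r in Ioi (R + |t|),
      ((dtu u t r) ^ 2 + (deriv (u t) r) ^ 2) * r ^ 3) atTop (nhds 0) ∧
  Tendsto (fun t : ℝ => ∫ r in Ioi (R + |t|),
      ((dtu u t r) ^ 2 + (deriv (u t) r) ^ 2) * r ^ 3) atBot (nhds 0)

/-- `sup_{t∈ℝ} ‖(u(t,·), ∂_t u(t,·))‖_{H(R+|t|)}`. -/
noncomputable def supH (R : ℝ) (u : ℝ → ℝ → ℝ) : ℝ≥0∞ :=
  ⨆ t : ℝ, eH (R + |t|) (u t) (fun r => dtu u t r)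


/-- linear system -/
structure NSys (m0 : ℝ) (w a b g : ℝ → ℝ → ℝ) : Prop where
  da : ∀ x y, m0 < x → m0 < y →
    HasDerivAt (fun y => a x y) ((a x y + b x y) / (2 * (x + y)) - g x y) y
  db : ∀ x y, m0 < x → m0 < y →
    HasDerivAt (fun x => b x y) ((a x y + b x y) / (2 * (x + y)) - g x y) x
  dw : ∀ x y, m0 < x → m0 < y → ∀ t, x + t > m0 → y + t > m0 →
    HasDerivAt (fun t => w (x + t) (y + t)) (a (x + t) (y + t) + b (x + t) (y + t)) t

theorem line_int (x y0 y1 μ N : ℝ) (f h : ℝ → ℝ) (h0 : 0 < x + y0) (h01 : y0 ≤ y1) (hN : 0 ≤ N)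
    (hf : ∀ y, y0 ≤ y → y ≤ y1 → HasDerivAt f (f y / (2 * (x + y)) + h y) y)
    (hh : ∀ y, y0 ≤ y → y ≤ y1 → |h y| ≤ μ / (2 * (x + y)) + N / (x + y) ^ 3) :
    (f y0 - μ - N / (x + y0) ^ 2) / √(x + y0) ≤ (f y1 - μ - N / (x + y1) ^ 2) / √(x + y1) := by
  have key : ∀ y, y0 ≤ y → y ≤ y1 →
      HasDerivAt (fun y => (f y - μ - N / (x + y) ^ 2) / √(x + y))
        ((h y + μ / (2 * (x + y)) + 5 / 2 * (N / (x + y) ^ 3)) / √(x + y)) y := by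
    intro y hy hy1
    have hs : 0 < x + y := by linarith
    have hq : 0 < √(x + y) := Real.sqrt_pos.2 hs
    have e1 : HasDerivAt (fun y => x + y) 1 y := by simpa using (hasDerivAt_id y).const_add x
    have e2 := e1.sqrt hs.ne'
    have e3 := (e1.pow 2)
    have e4 := ((((hf y hy hy1).sub_const μ).sub ((hasDerivAt_const y N).div e3 (pow_ne_zero 2 hs.ne')))).div e2 hq.ne'
    refine e4.congr_deriv ?_
    have hsq : √(x + y) ^ 2 = x + y := Real.sq_sqrt hs.le
    simp only [Pi.pow_apply]
    generalize hz : √(x + y) = z at *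
    rw [← hsq]
    simp only [Pi.sub_apply, Pi.div_apply, Pi.pow_apply]
    rw [← hsq]
    field_simp
    ring
  have hm : MonotoneOn (fun y => (f y - μ - N / (x + y) ^ 2) / √(x + y)) (Icc y0 y1) := by
    apply monotoneOn_of_hasDerivWithinAt_nonneg (convex_Icc y0 y1)
      (f' := fun y => (h y + μ / (2 * (x + y)) + 5 / 2 * (N / (x + y) ^ 3)) / √(x + y))
    · intro y hy
      exact (key y hy.1 hy.2).continuousAt.continuousWithinAt
    · intro y hy
      rw [interior_Icc] at hy
      exact (key y hy.1.le hy.2.le).hasDerivWithinAt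
    · intro y hy
      rw [interior_Icc] at hy
      have hs : 0 < x + y := by linarith [hy.1]
      have := (abs_le.1 (hh y hy.1.le hy.2.le)).1
      have h3 : 0 ≤ N / (x + y) ^ 3 := by positivity
      apply div_nonneg _ (Real.sqrt_nonneg _)
      linarith
  exact hm ⟨le_rfl, h01⟩ ⟨h01, le_rfl⟩ h01

theorem line_lim (x y0 μ N B : ℝ) (f h : ℝ → ℝ) (h0 : 0 < x + y0) (hN : 0 ≤ N) (hμ : 0 ≤ μ)
    (hf : ∀ y, y0 ≤ y → HasDerivAt f (f y / (2 * (x + y)) + h y) y)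
    (hh : ∀ y, y0 ≤ y → |h y| ≤ μ / (2 * (x + y)) + N / (x + y) ^ 3)
    (hB : ∀ y, y0 ≤ y → |f y| ≤ B) :
    |f y0| ≤ μ + N / (x + y0) ^ 2 := by
  have lim : Tendsto (fun y => B / √(x + y)) atTop (nhds 0) := by
    apply Tendsto.div_atTop tendsto_const_nhds
    exact Real.tendsto_sqrt_atTop.comp (tendsto_atTop_add_const_left _ _ tendsto_id)
  have main : ∀ f h : ℝ → ℝ, (∀ y, y0 ≤ y → HasDerivAt f (f y / (2 * (x + y)) + h y) y) →
    (∀ y, y0 ≤ y → |h y| ≤ μ / (2 * (x + y)) + N / (x + y) ^ 3) →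
    (∀ y, y0 ≤ y → |f y| ≤ B) → f y0 ≤ μ + N / (x + y0) ^ 2 := by
    intro f h hf hh hB
    have : (f y0 - μ - N / (x + y0) ^ 2) / √(x + y0) ≤ 0 := by
      refine ge_of_tendsto lim ?_
      filter_upwards [eventually_ge_atTop y0] with y hy
      refine (line_int x y0 y μ N f h h0 hy hN (fun z hz _ => hf z hz) (fun z hz _ => hh z hz)).trans ?_
      have hs : 0 < x + y := by linarith
      have : 0 ≤ N / (x + y) ^ 2 := by positivity
      have h4 := (abs_le.1 (hB y hy)).2
      gcongr
      linarith
    have hq : 0 < √(x + y0) := Real.sqrt_pos.2 h0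
    have h5 := (div_le_iff₀ hq).1 this
    linarith
  rw [abs_le]
  constructor
  · have := main (fun y => - f y) (fun y => - h y) (fun y hy => by
      exact ((hf y hy).fun_neg).congr_deriv (by ring)) (fun y hy => by simpa using hh y hy)
      (fun y hy => by simpa using hB y hy)
    linarith
  · exact main f h hf hh hB

theorem line_two (m x y0 μ ν N B : ℝ) (f h : ℝ → ℝ) (hm : 0 < m) (hx : m ≤ x) (hy : m ≤ y0) (hN : 0 ≤ N)
    (hμ : 0 ≤ μ) (hν : 0 ≤ ν)
    (hf : ∀ y, m ≤ y → HasDerivAt f (f y / (2 * (x + y)) + h y) y)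
    (hh : ∀ y, m ≤ y → |h y| ≤ μ / (2 * (x + y)) + N / (x + y) ^ 3)
    (hh2 : ∀ y, 2 * m ≤ y → |h y| ≤ ν / (2 * (x + y)) + N / (x + y) ^ 3)
    (hB : ∀ y, m ≤ y → |f y| ≤ B) :
    |f y0| ≤ (μ + ν) / 2 + N / m ^ 2 := by
  have hNs : ∀ y, m ≤ y → N / (x + y) ^ 2 ≤ N / m ^ 2 := by
    intro y hy
    gcongr; linarith
  -- first simple bound
  have hs : |f y0| ≤ μ + N / m ^ 2 :=
    (line_lim x y0 μ N B f h (by linarith) hN hμ (fun y hy' => hf y (by linarith))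
      (fun y hy' => hh y (by linarith)) (fun y hy' => hB y (by linarith))).trans (by
        have := hNs y0 hy; linarith)
  rcases le_total μ ν with hμν | hμν
  · linarith
  rcases le_total (2 * m) y0 with hy2 | hy2
  · have := (line_lim x y0 ν N B f h (by linarith) hN hν (fun y hy' => hf y (by linarith))
      (fun y hy' => hh2 y (by linarith)) (fun y hy' => hB y (by linarith)))
    have := hNs y0 hy; linarith
  have h1 := (line_lim x (2*m) ν N B f h (by linarith) hN hν (fun y hy' => hf y (by linarith))
      (fun y hy' => hh2 y (by linarith)) (fun y hy' => hB y (by linarith)))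
  have main : ∀ f h : ℝ → ℝ, (∀ y, m ≤ y → HasDerivAt f (f y / (2 * (x + y)) + h y) y) →
    (∀ y, m ≤ y → |h y| ≤ μ / (2 * (x + y)) + N / (x + y) ^ 3) →
    |f (2*m)| ≤ ν + N / (x + 2 * m) ^ 2 → f y0 ≤ (μ + ν) / 2 + N / m ^ 2 := by
    intro f h hf hh hb
    have k := line_int x y0 (2 * m) μ N f h (by linarith) hy2 hN (fun z hz _ => hf z (by linarith))
      (fun z hz _ => hh z (by linarith))
    have s0 : 0 < x + y0 := by linarith
    have s1 : 0 < x + 2 * m := by linarith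
    have q0 : 0 < √(x + y0) := Real.sqrt_pos.2 s0
    have q1 : 0 < √(x + 2 * m) := Real.sqrt_pos.2 s1
    have q01 : √(x + 2 * m) ≤ 2 * √(x + y0) := by
      rw [show (2:ℝ) * √(x + y0) = √(4 * (x + y0)) by
        rw [Real.sqrt_mul (by norm_num)]; congr 1
        rw [show (4:ℝ) = 2 ^ 2 by norm_num, Real.sqrt_sq (by norm_num)]]
      apply Real.sqrt_le_sqrt; linarith
    have hb' := (abs_le.1 hb).2
    have k2 : (f (2*m) - μ - N / (x + 2*m) ^ 2) / √(x + 2*m) ≤ -((μ - ν) / (2 * √(x + y0))) := by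
      calc _ ≤ (-(μ - ν)) / √(x + 2*m) := by gcongr; linarith
        _ = -((μ - ν) / √(x + 2*m)) := by ring
        _ ≤ _ := by
          apply neg_le_neg
          apply div_le_div_of_nonneg_left _ q1 q01
          linarith
    have k3 := (div_le_iff₀ q0).1 (k.trans k2)
    have k4 : -((μ - ν) / (2 * √(x + y0))) * √(x + y0) = - (μ - ν) / 2 := by
      field_simp
    have := hNs y0 hy
    linarith
  rw [abs_le]
  constructor
  · have := main (fun y => - f y) (fun y => - h y) (fun y hy => by
      exact ((hf y hy).fun_neg).congr_deriv (by ring)) (fun y hy => by simpa using hh y hy)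
      (by simpa using h1)
    linarith
  · exact main f h hf hh h1

def PB (a b : ℝ → ℝ → ℝ) (m μ : ℝ) : Prop := ∀ x y, m ≤ x → m ≤ y → |a x y| ≤ μ ∧ |b x y| ≤ μ

theorem half_step {m0 : ℝ} {a b g : ℝ → ℝ → ℝ} {N B : ℝ} (hN : 0 ≤ N) (m μ ν : ℝ)
    (hm : 0 < m) (hmm : m0 < m) (hμ : 0 ≤ μ) (hν : 0 ≤ ν)
    (da : ∀ x y, m0 < x → m0 < y →
      HasDerivAt (fun y => a x y) ((a x y + b x y) / (2 * (x + y)) - g x y) y)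
    (hg : ∀ x y, m0 < x → m0 < y → |g x y| ≤ N / (x + y) ^ 3)
    (x : ℝ) (hx : m ≤ x)
    (h1 : ∀ y, m ≤ y → |b x y| ≤ μ) (h2 : ∀ y, 2 * m ≤ y → |b x y| ≤ ν)
    (hB : ∀ y, m ≤ y → |a x y| ≤ B) (y : ℝ) (hy : m ≤ y) :
    |a x y| ≤ (μ + ν) / 2 + N / m ^ 2 := by
  have aux : ∀ κ y, m ≤ y → |b x y| ≤ κ →
      |b x y / (2 * (x + y)) - g x y| ≤ κ / (2 * (x + y)) + N / (x + y) ^ 3 := by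
    intro κ y hy hk
    have hs : 0 < x + y := by linarith
    refine (abs_sub _ _).trans ?_
    rw [abs_div, abs_of_pos (show 0 < 2 * (x + y) by linarith)]
    have := hg x y (by linarith) (by linarith)
    gcongr
  refine line_two m x y μ ν N B (fun y => a x y) (fun y => b x y / (2 * (x + y)) - g x y) hm hx hy hN
    hμ hν ?_ ?_ ?_ hB
  · intro z hz
    refine (da x z (by linarith) (by linarith)).congr_deriv ?_
    ring
  · intro z hz
    exact aux μ z hz (h1 z hz)
  · intro z hz
    exact aux ν z (by linarith) (h2 z hz)

theorem full_step {m0 : ℝ} {w a b g : ℝ → ℝ → ℝ} {N : ℝ} (hN : 0 ≤ N) (m μ ν : ℝ)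
    (hm : 0 < m) (hmm : m0 < m) (hμ : 0 ≤ μ) (hν : 0 ≤ ν)
    (S : NSys m0 w a b g)
    (hg : ∀ x y, m0 < x → m0 < y → |g x y| ≤ N / (x + y) ^ 3)
    (h1 : PB a b m μ) (h2 : PB a b (2 * m) ν) :
    PB a b m ((3 * μ + ν) / 4 + 2 * (N / m ^ 2)) := by
  have hc : 0 ≤ N / m ^ 2 := by positivity
  have hdb : ∀ x y, m0 < x → m0 < y →
      HasDerivAt (fun y => b y x) ((b y x + a y x) / (2 * (x + y)) - g y x) y := by
    intro x y hx hy
    refine (S.db y x hy hx).congr_deriv ?_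
    ring
  have hg' : ∀ x y, m0 < x → m0 < y → |g y x| ≤ N / (x + y) ^ 3 := by
    intro x y hx hy
    have := hg y x hy hx
    rwa [add_comm y x] at this
  have hb : ∀ x y, m ≤ x → 2 * m ≤ y → |b x y| ≤ (μ + ν) / 2 + N / m ^ 2 := by
    intro x y hx hy
    exact half_step (m0 := m0) (a := fun y x => b x y) (b := fun y x => a x y) (g := fun y x => g x y) (B := μ) hN m μ ν hm hmm hμ hν
      hdb hg' y (by linarith) (fun z hz => (h1 z y hz (by linarith)).1)
      (fun z hz => (h2 z y hz (by linarith)).1) (fun z hz => (h1 z y hz (by linarith)).2) x hx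
  have ha : ∀ x y, 2 * m ≤ x → m ≤ y → |a x y| ≤ (μ + ν) / 2 + N / m ^ 2 := by
    intro x y hx hy
    exact half_step (m0 := m0) (B := μ) hN m μ ν hm hmm hμ hν
      S.da hg x (by linarith) (fun z hz => (h1 x z (by linarith) (by linarith)).2)
      (fun z hz => (h2 x z (by linarith) hz).2) (fun z hz => (h1 x z (by linarith) hz).1) y hy
  intro x y hx hy
  constructor
  · have := half_step (m0 := m0) (B := μ) hN m μ ((μ + ν) / 2 + N / m ^ 2) hm hmm hμ (by positivity)
      S.da hg x (by linarith) (fun z hz => (h1 x z (by linarith) (by linarith)).2)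
      (fun z hz => hb x z (by linarith) hz) (fun z hz => (h1 x z (by linarith) hz).1) y hy
    linarith
  · have := half_step (m0 := m0) (a := fun y x => b x y) (b := fun y x => a x y) (g := fun y x => g x y) (B := μ) hN m μ ((μ + ν) / 2 + N / m ^ 2) hm hmm hμ (by positivity)
      hdb hg' y (by linarith) (fun z hz => (h1 z y hz (by linarith)).1)
      (fun z hz => ha z y hz (by linarith)) (fun z hz => (h1 z y hz (by linarith)).2) x hx
    linarith

theorem dyadic {m0 : ℝ} {w a b g : ℝ → ℝ → ℝ} {N : ℝ} (hN : 0 ≤ N) (m μ ν : ℝ)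
    (hm : 0 < m) (hmm : m0 < m) (hν : 0 ≤ ν)
    (S : NSys m0 w a b g)
    (hg : ∀ x y, m0 < x → m0 < y → |g x y| ≤ N / (x + y) ^ 3)
    (h1 : PB a b m μ) (h2 : PB a b (2 * m) ν) :
    PB a b m (ν + 8 * (N / m ^ 2)) := by
  have hμ : 0 ≤ μ := (abs_nonneg _).trans (h1 m m le_rfl le_rfl).1
  set L := ν + 8 * (N / m ^ 2) with hL
  have hL0 : 0 ≤ L := by positivity
  have it : ∀ n : ℕ, PB a b m (L + (3 / 4) ^ n * μ) := by
    intro n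
    induction n with
    | zero =>
      intro x y hx hy
      have := h1 x y hx hy
      constructor <;> simp only [pow_zero] <;> linarith [this.1, this.2]
    | succ n ih =>
      have := full_step hN m _ ν hm hmm (by positivity) hν S hg ih h2
      convert this using 1
      rw [pow_succ, hL]; ring
  have lim : Tendsto (fun n : ℕ => L + (3 / 4 : ℝ) ^ n * μ) atTop (nhds L) := by
    have := (tendsto_pow_atTop_nhds_zero_of_lt_one (r := (3 / 4 : ℝ)) (by norm_num) (by norm_num))
    simpa using (this.mul_const μ).const_add L
  intro x y hx hy
  exact ⟨ge_of_tendsto' lim fun n => (it n x y hx hy).1, ge_of_tendsto' lim fun n => (it n x y hx hy).2⟩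

theorem lin_bound {m0 : ℝ} {w a b g : ℝ → ℝ → ℝ} {N B : ℝ} (hN : 0 ≤ N) (hm0 : 0 < m0)
    (S : NSys m0 w a b g)
    (hg : ∀ x y, m0 < x → m0 < y → |g x y| ≤ N / (x + y) ^ 3)
    (hB : ∀ m, m0 < m → PB a b m B)
    (hv : ∀ ε > 0, ∃ M, ∀ m, M ≤ m → PB a b m ε) (m : ℝ) (hm : m0 < m) :
    PB a b m (11 * (N / m ^ 2)) := by
  have ind : ∀ k : ℕ, ∀ m ν, m0 < m → 0 ≤ ν → PB a b (2 ^ k * m) ν →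
      PB a b m (ν + 11 * (N / m ^ 2)) := by
    intro k
    induction k with
    | zero =>
      intro m ν hm hν h x y hx hy
      have hmp : 0 < m := by linarith
      have hc : 0 ≤ N / m ^ 2 := by positivity
      have := h x y (by simpa using hx) (by simpa using hy)
      constructor <;> linarith [this.1, this.2]
    | succ k ih =>
      intro m ν hm hν h
      have hmp : 0 < m := by linarith
      have hc : 0 ≤ N / m ^ 2 := by positivity
      have h2 := ih (2 * m) ν (by linarith) hν (by convert h using 1; ring)
      have e : N / (2 * m) ^ 2 = N / m ^ 2 / 4 := by field_simp; ring
      rw [e] at h2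
      have := dyadic hN m B _ hmp hm (by positivity) S hg (hB m hm) h2
      intro x y hx hy
      have := this x y hx hy
      constructor <;> linarith [this.1, this.2]
  have hmp : 0 < m := by linarith
  have key : ∀ ε > 0, PB a b m (ε + 11 * (N / m ^ 2)) := by
    intro ε hε
    obtain ⟨M, hM⟩ := hv ε hε
    have : Tendsto (fun k : ℕ => (2:ℝ) ^ k * m) atTop atTop :=
      (tendsto_pow_atTop_atTop_of_one_lt (by norm_num : (1:ℝ) < 2)).atTop_mul_const hmp
    obtain ⟨k, hk⟩ := (this.eventually (eventually_ge_atTop M)).exists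
    exact ind k m ε hm hε.le (hM _ hk)
  intro x y hx hy
  constructor
  · refine le_of_forall_pos_le_add fun ε hε => ?_
    have := (key ε hε x y hx hy).1; linarith
  · refine le_of_forall_pos_le_add fun ε hε => ?_
    have := (key ε hε x y hx hy).2; linarith

theorem slice_diff {m0 μ : ℝ} {w a b g : ℝ → ℝ → ℝ} (hm0 : 0 < m0) (S : NSys m0 w a b g)
    (hP : ∀ m, m0 < m → PB a b m (μ / m ^ 2)) (x y T : ℝ) (hx : m0 < x) (hy : m0 < y) (hT : 0 ≤ T) :
    |w x y - w (x + T) (y + T)| ≤ 2 * μ / min x y := by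
  set m := min x y with hm
  have hmm : m0 < m := lt_min hx hy
  have hμ : 0 ≤ μ := by
    have := (abs_nonneg _).trans (hP m hmm m m le_rfl le_rfl).1
    have h2 : 0 < m ^ 2 := by have : 0 < m := by linarith
                              positivity
    by_contra hh
    push Not at hh
    have := div_neg_of_neg_of_pos hh h2
    linarith
  have main : ∀ w' : ℝ → ℝ, ∀ d : ℝ → ℝ, (∀ t, 0 ≤ t → HasDerivAt w' (d t) t) →
      (∀ t, 0 ≤ t → |d t| ≤ 2 * μ / (m + t) ^ 2) → w' 0 - w' T ≤ 2 * μ / m := by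
    intro w' d hd hb
    have key : ∀ t, 0 ≤ t → HasDerivAt (fun t => w' t - 2 * μ / (m + t))
        (d t + 2 * μ / (m + t) ^ 2) t := by
      intro t ht
      have hs : m + t ≠ 0 := by linarith
      have e1 : HasDerivAt (fun t => m + t) 1 t := by simpa using (hasDerivAt_id t).const_add m
      have := (hd t ht).fun_sub ((hasDerivAt_const t (2 * μ)).fun_div e1 hs)
      refine this.congr_deriv ?_
      ring
    have hmono : MonotoneOn (fun t => w' t - 2 * μ / (m + t)) (Ici 0) := by
      apply monotoneOn_of_hasDerivWithinAt_nonneg (convex_Ici 0)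
        (f' := fun t => d t + 2 * μ / (m + t) ^ 2)
      · intro t ht
        exact (key t ht).continuousAt.continuousWithinAt
      · intro t ht
        rw [interior_Ici] at ht
        exact (key t ht.le).hasDerivWithinAt
      · intro t ht
        rw [interior_Ici] at ht
        have := (abs_le.1 (hb t ht.le)).1
        linarith
    have h1 := hmono (mem_Ici.2 le_rfl) hT hT
    have h2 : 0 ≤ 2 * μ / (m + T) := by
      have : 0 < m + T := by linarith
      positivity
    simp only [add_zero] at h1
    linarith
  have hd : ∀ t, 0 ≤ t → HasDerivAt (fun t => w (x + t) (y + t)) (a (x + t) (y + t) + b (x + t) (y + t)) t :=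
    fun t ht => S.dw x y hx hy t (by linarith) (by linarith)
  have hb : ∀ t, 0 ≤ t → |a (x + t) (y + t) + b (x + t) (y + t)| ≤ 2 * μ / (m + t) ^ 2 := by
    intro t ht
    have := hP (m + t) (by linarith) (x + t) (y + t) (by linarith [min_le_left x y]) (by linarith [min_le_right x y])
    refine (abs_add_le _ _).trans ?_
    rw [mul_div_assoc]
    linarith [this.1, this.2]
  rw [abs_le]
  constructor
  · have := main (fun t => - w (x + t) (y + t)) _ (fun t ht => (hd t ht).fun_neg)
      (fun t ht => by rw [abs_neg]; exact hb t ht)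
    simp only [add_zero] at this
    linarith
  · have := main (fun t => w (x + t) (y + t)) _ hd hb
    simpa only [add_zero] using this

theorem slice_lim {m0 μ : ℝ} {w a b g : ℝ → ℝ → ℝ} (hm0 : 0 < m0) (S : NSys m0 w a b g)
    (hP : ∀ m, m0 < m → PB a b m (μ / m ^ 2)) (x y : ℝ) (hx : m0 < x) (hy : m0 < y) (l : ℝ)
    (hl : Tendsto (fun t => w (x + t) (y + t)) atTop (nhds l)) :
    |w x y - l| ≤ 2 * μ / min x y := by
  refine le_of_tendsto ((tendsto_const_nhds.sub hl).abs) ?_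
  filter_upwards [eventually_ge_atTop 0] with T hT
  exact slice_diff hm0 S hP x y T hx hy hT

theorem pb_to_zero {m0 μ : ℝ} {a b : ℝ → ℝ → ℝ}
    (hP : ∀ m, m0 < m → PB a b m (μ / m ^ 2)) :
    ∀ ε > 0, ∃ M, ∀ m, M ≤ m → PB a b m ε := by
  intro ε hε
  have : Tendsto (fun m : ℝ => μ / m ^ 2) atTop (nhds 0) :=
    tendsto_const_nhds.div_atTop (tendsto_pow_atTop (by norm_num))
  obtain ⟨M, hM⟩ := eventually_atTop.1 ((this.eventually (gt_mem_nhds hε)).and (eventually_gt_atTop m0))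
  refine ⟨M, fun m hm x y hx hy => ?_⟩
  have h := hM m hm
  have h2 := hP m h.2 x y hx hy
  exact ⟨h2.1.trans h.1.le, h2.2.trans h.1.le⟩

theorem uniq {m0 μ D : ℝ} {w a b g : ℝ → ℝ → ℝ} (hm0 : 0 < m0) (S : NSys m0 w a b g)
    (hD : 0 ≤ D) (hDm : 44 * D ≤ m0)
    (hg : ∀ x y, m0 < x → m0 < y → |g x y| ≤ D / (x + y) ^ 3 * |w x y|)
    (hP : ∀ m, m0 < m → PB a b m (μ / m ^ 2))
    (hl : ∀ x y, m0 < x → m0 < y → Tendsto (fun t => w (x + t) (y + t)) atTop (nhds 0)) :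
    ∀ x y, m0 < x → m0 < y → w x y = 0 := by
  have step : ∀ μ, 0 ≤ μ → (∀ m, m0 < m → PB a b m (μ / m ^ 2)) →
      (∀ m, m0 < m → PB a b m (μ / 2 / m ^ 2)) := by
    intro μ hμ hP m hm
    have hg2 : ∀ x y, m0 < x → m0 < y → |g x y| ≤ (2 * D * μ / m0) / (x + y) ^ 3 := by
      intro x y hx hy
      refine (hg x y hx hy).trans ?_
      have h1 := slice_lim hm0 S hP x y hx hy 0 (hl x y hx hy)
      rw [sub_zero] at h1
      have h2 : 2 * μ / min x y ≤ 2 * μ / m0 := by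
        gcongr
        exact (lt_min hx hy).le
      have hs : 0 < x + y := by linarith
      calc _ ≤ D / (x + y) ^ 3 * (2 * μ / m0) := by
            gcongr; exact h1.trans h2
        _ = _ := by ring
    have hB : ∀ m, m0 < m → PB a b m (μ / m0 ^ 2) := by
      intro m hm x y hx hy
      have h := hP m hm x y hx hy
      have : μ / m ^ 2 ≤ μ / m0 ^ 2 := by gcongr
      exact ⟨h.1.trans this, h.2.trans this⟩
    have := lin_bound (by positivity) hm0 S hg2 hB (pb_to_zero hP) m hm
    have hmp : 0 < m := by linarith
    have e : 11 * (2 * D * μ / m0 / m ^ 2) ≤ μ / 2 / m ^ 2 := by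
      rw [← mul_div_assoc]
      gcongr
      rw [← mul_div_assoc, div_le_iff₀ hm0]
      nlinarith
    intro x y hx hy
    have h := this x y hx hy
    exact ⟨h.1.trans e, h.2.trans e⟩
  have hμ : 0 ≤ μ := by
    have := (abs_nonneg _).trans (hP (m0+1) (by linarith) (m0+1) (m0+1) le_rfl le_rfl).1
    by_contra hh
    push Not at hh
    have := div_neg_of_neg_of_pos hh (show 0 < (m0+1)^2 by positivity)
    linarith
  have it : ∀ n : ℕ, ∀ m, m0 < m → PB a b m (μ * (1 / 2) ^ n / m ^ 2) := by
    intro n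
    induction n with
    | zero => simpa using hP
    | succ n ih =>
      have := step _ (by positivity) ih
      intro m hm
      convert this m hm using 1
      rw [pow_succ]; ring
  intro x y hx hy
  have hb : ∀ n : ℕ, |w x y| ≤ 2 * (μ * (1 / 2) ^ n) / min x y := by
    intro n
    have := slice_lim hm0 S (it n) x y hx hy 0 (hl x y hx hy)
    rwa [sub_zero] at this
  have lim : Tendsto (fun n : ℕ => 2 * (μ * (1 / 2 : ℝ) ^ n) / min x y) atTop (nhds 0) := by
    have := (tendsto_pow_atTop_nhds_zero_of_lt_one (r := (1 / 2 : ℝ)) (by norm_num) (by norm_num))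
    simpa using ((this.const_mul μ).const_mul 2).div_const (min x y)
  have := ge_of_tendsto' lim hb
  exact abs_nonpos_iff.1 this

theorem NSys.sub {m0 : ℝ} {w a b g w' a' b' g' : ℝ → ℝ → ℝ} (S : NSys m0 w a b g)
    (S' : NSys m0 w' a' b' g') :
    NSys m0 (fun x y => w x y - w' x y) (fun x y => a x y - a' x y) (fun x y => b x y - b' x y)
      (fun x y => g x y - g' x y) where
  da x y hx hy := ((S.da x y hx hy).fun_sub (S'.da x y hx hy)).congr_deriv (by ring)
  db x y hx hy := ((S.db x y hx hy).fun_sub (S'.db x y hx hy)).congr_deriv (by ring)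
  dw x y hx hy t h1 h2 := ((S.dw x y hx hy t h1 h2).fun_sub (S'.dw x y hx hy t h1 h2)).congr_deriv (by ring)

theorem NSys.mono {m0 m1 : ℝ} (h : m0 ≤ m1) {w a b g : ℝ → ℝ → ℝ} (S : NSys m0 w a b g) :
    NSys m1 w a b g where
  da x y hx hy := S.da x y (by linarith) (by linarith)
  db x y hx hy := S.db x y (by linarith) (by linarith)
  dw x y hx hy t h1 h2 := S.dw x y (by linarith) (by linarith) t (by linarith) (by linarith)

theorem NSys.shift {m0 m1 : ℝ} {w a b g : ℝ → ℝ → ℝ} (S : NSys m0 w a b g) (h : ℝ)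
    (hm : m0 + |h| ≤ m1) :
    NSys m1 (fun x y => w (x - h) (y + h)) (fun x y => a (x - h) (y + h))
      (fun x y => b (x - h) (y + h)) (fun x y => g (x - h) (y + h)) where
  da x y hx hy := by
    have h1 := le_abs_self h
    have h2 := neg_abs_le h
    have e : HasDerivAt (fun y => y + h) 1 y := by simpa using (hasDerivAt_id y).add_const h
    have := (S.da (x - h) (y + h) (by linarith) (by linarith)).comp y e
    refine this.congr_deriv ?_
    rw [show x - h + (y + h) = x + y by ring, mul_one]
  db x y hx hy := by
    have h1 := le_abs_self h
    have h2 := neg_abs_le h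
    have e : HasDerivAt (fun x => x - h) 1 x := by simpa using (hasDerivAt_id x).sub_const h
    have := (S.db (x - h) (y + h) (by linarith) (by linarith)).comp x e
    refine this.congr_deriv ?_
    rw [show x - h + (y + h) = x + y by ring, mul_one]
  dw x y hx hy t ht1 ht2 := by
    have h1 := le_abs_self h
    have h2 := neg_abs_le h
    have := S.dw (x - h) (y + h) (by linarith) (by linarith) t (by linarith) (by linarith)
    have e : ∀ t, x + t - h = x - h + t := fun t => by ring
    have e' : ∀ t, y + t + h = y + h + t := fun t => by ring
    simpa only [e, e'] using this

/-- data of a solution -/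
def Dat (p : ℕ) (m0 : ℝ) (u ut ur : ℝ → ℝ → ℝ) : Prop :=
  ∀ t r, m0 + |t| < r → ∃ utt utr urr : ℝ,
    HasFDerivAt (fun q : ℝ × ℝ => u q.1 q.2)
      (ut t r • ContinuousLinearMap.fst ℝ ℝ ℝ + ur t r • ContinuousLinearMap.snd ℝ ℝ ℝ) (t, r) ∧
    HasFDerivAt (fun q : ℝ × ℝ => ut q.1 q.2)
      (utt • ContinuousLinearMap.fst ℝ ℝ ℝ + utr • ContinuousLinearMap.snd ℝ ℝ ℝ) (t, r) ∧
    HasFDerivAt (fun q : ℝ × ℝ => ur q.1 q.2)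
      (utr • ContinuousLinearMap.fst ℝ ℝ ℝ + urr • ContinuousLinearMap.snd ℝ ℝ ℝ) (t, r) ∧
    utt - urr - 3 / r * ur t r = u t r ^ p

theorem chain2 {f : ℝ → ℝ → ℝ} {α β : ℝ} {T Rr : ℝ → ℝ} {T' R' s : ℝ}
    (hT : HasDerivAt T T' s) (hR : HasDerivAt Rr R' s)
    (hf : HasFDerivAt (fun q : ℝ × ℝ => f q.1 q.2)
      (α • ContinuousLinearMap.fst ℝ ℝ ℝ + β • ContinuousLinearMap.snd ℝ ℝ ℝ) (T s, Rr s)) :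
    HasDerivAt (fun s => f (T s) (Rr s)) (α * T' + β * R') s := by
  have := hf.comp_hasDerivAt s (hT.prodMk hR)
  refine HasDerivAt.congr_deriv this ?_
  simp

theorem Dat.reflect {p : ℕ} {m0 : ℝ} {u ut ur : ℝ → ℝ → ℝ} (H : Dat p m0 u ut ur) :
    Dat p m0 (fun t r => u (-t) r) (fun t r => - ut (-t) r) (fun t r => ur (-t) r) := by
  intro t r h
  obtain ⟨utt, utr, urr, h1, h2, h3, h4⟩ := H (-t) r (by simpa using h)
  have e : HasFDerivAt (fun q : ℝ × ℝ => (-q.1, q.2))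
      ((-ContinuousLinearMap.fst ℝ ℝ ℝ).prod (ContinuousLinearMap.snd ℝ ℝ ℝ)) (t, r) :=
    (hasFDerivAt_fst.fun_neg).prodMk hasFDerivAt_snd
  refine ⟨utt, -utr, urr, ?_, ?_, ?_, h4⟩
  · refine (HasFDerivAt.comp (g := fun q : ℝ × ℝ => u q.1 q.2) (t, r) h1 e).congr_fderiv ?_
    ext <;> simp
  · refine ((HasFDerivAt.comp (g := fun q : ℝ × ℝ => ut q.1 q.2) (t, r) h2 e).fun_neg).congr_fderiv ?_
    ext <;> simp
  · refine (HasFDerivAt.comp (g := fun q : ℝ × ℝ => ur q.1 q.2) (t, r) h3 e).congr_fderiv ?_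
    ext <;> simp

noncomputable def vv (u : ℝ → ℝ → ℝ) (x y : ℝ) : ℝ := ((x + y) / 2) ^ 2 * u ((y - x) / 2) ((x + y) / 2)
noncomputable def aa (u ut ur : ℝ → ℝ → ℝ) (x y : ℝ) : ℝ :=
  ((x + y) / 2) ^ 2 * (ur ((y - x) / 2) ((x + y) / 2) - ut ((y - x) / 2) ((x + y) / 2)) / 2
    + (x + y) / 2 * u ((y - x) / 2) ((x + y) / 2)
noncomputable def bb (u ut ur : ℝ → ℝ → ℝ) (x y : ℝ) : ℝ :=
  ((x + y) / 2) ^ 2 * (ur ((y - x) / 2) ((x + y) / 2) + ut ((y - x) / 2) ((x + y) / 2)) / 2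
    + (x + y) / 2 * u ((y - x) / 2) ((x + y) / 2)
noncomputable def gg (p : ℕ) (u : ℝ → ℝ → ℝ) (x y : ℝ) : ℝ :=
  ((x + y) / 2) ^ 2 * u ((y - x) / 2) ((x + y) / 2) ^ p / 4

theorem reg_of {m0 x y : ℝ} (hx : m0 < x) (hy : m0 < y) : m0 + |(y - x) / 2| < (x + y) / 2 := by
  have : |(y - x) / 2| < (x + y) / 2 - m0 := by
    rw [abs_lt]; constructor <;> linarith
  linarith

theorem dvv_y {p : ℕ} {m0 : ℝ} {u ut ur : ℝ → ℝ → ℝ} (H : Dat p m0 u ut ur) (x y : ℝ)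
    (hx : m0 < x) (hy : m0 < y) : HasDerivAt (fun y => vv u x y) (bb u ut ur x y) y := by
  obtain ⟨utt, utr, urr, h1, h2, h3, h4⟩ := H _ _ (reg_of hx hy)
  have eT : HasDerivAt (fun y => (y - x) / 2) (1 / 2) y :=
    ((hasDerivAt_id y).sub_const x).div_const 2
  have eR : HasDerivAt (fun y => (x + y) / 2) (1 / 2) y :=
    ((hasDerivAt_id y).const_add x).div_const 2
  refine ((eR.fun_pow 2).fun_mul (chain2 eT eR h1)).congr_deriv ?_
  simp only [bb]; push_cast; ring

theorem Dat.nsys {p : ℕ} {m0 : ℝ} {u ut ur : ℝ → ℝ → ℝ} (hm0 : 0 < m0) (H : Dat p m0 u ut ur) :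
    NSys m0 (vv u) (aa u ut ur) (bb u ut ur) (gg p u) where
  da x y hx hy := by
    obtain ⟨utt, utr, urr, h1, h2, h3, h4⟩ := H _ _ (reg_of hx hy)
    have eT : HasDerivAt (fun y => (y - x) / 2) (1 / 2) y :=
      ((hasDerivAt_id y).sub_const x).div_const 2
    have eR : HasDerivAt (fun y => (x + y) / 2) (1 / 2) y :=
      ((hasDerivAt_id y).const_add x).div_const 2
    refine (((((eR.fun_pow 2).fun_mul ((chain2 eT eR h3).fun_sub (chain2 eT eR h2))).div_const 2)).fun_add
      (eR.fun_mul (chain2 eT eR h1))).congr_deriv ?_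
    simp only [aa, bb, gg]
    rw [← h4]
    have hs : x + y ≠ 0 := by linarith
    field_simp
    push_cast
    ring
  db x y hx hy := by
    obtain ⟨utt, utr, urr, h1, h2, h3, h4⟩ := H _ _ (reg_of hx hy)
    have eT : HasDerivAt (fun x => (y - x) / 2) (-1 / 2) x :=
      ((hasDerivAt_id x).const_sub y).div_const 2
    have eR : HasDerivAt (fun x => (x + y) / 2) (1 / 2) x :=
      ((hasDerivAt_id x).add_const y).div_const 2
    refine (((((eR.fun_pow 2).fun_mul ((chain2 eT eR h3).fun_add (chain2 eT eR h2))).div_const 2)).fun_add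
      (eR.fun_mul (chain2 eT eR h1))).congr_deriv ?_
    simp only [aa, bb, gg]
    rw [← h4]
    have hs : x + y ≠ 0 := by linarith
    field_simp
    push_cast
    ring
  dw x y hx hy t ht1 ht2 := by
    obtain ⟨utt, utr, urr, h1, h2, h3, h4⟩ := H _ _ (reg_of ht1 ht2)
    have eT : HasDerivAt (fun t => (y + t - (x + t)) / 2) ((1 - 1) / 2) t :=
      (((hasDerivAt_id t).const_add y).sub ((hasDerivAt_id t).const_add x)).div_const 2
    have eR : HasDerivAt (fun t => (x + t + (y + t)) / 2) ((1 + 1) / 2) t :=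
      (((hasDerivAt_id t).const_add x).add ((hasDerivAt_id t).const_add y)).div_const 2
    refine ((eR.fun_pow 2).fun_mul (chain2 eT eR h1)).congr_deriv ?_
    simp only [aa, bb]; push_cast; ring

theorem gg_bound {p : ℕ} (hp : 5 ≤ p) {U ε r : ℝ} (hr : 1 ≤ r) (hε : 0 < ε) (hε1 : ε ≤ 1)
    (hu : |U| ≤ ε / r) : |r ^ 2 * U ^ p / 4| ≤ 2 * ε / (2 * r) ^ 3 := by
  have hr0 : 0 < r := by linarith
  have h1 : |U| ≤ 1 := hu.trans ((div_le_one hr0).2 (by linarith))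
  have h2 : |U| ^ p ≤ |U| ^ 5 := pow_le_pow_of_le_one (abs_nonneg _) h1 hp
  have h3 : |U| ^ 5 ≤ (ε / r) ^ 5 := by gcongr
  have h4 : (ε / r) ^ 5 ≤ ε / r ^ 5 := by
    rw [div_pow]
    gcongr
    calc ε ^ 5 ≤ ε ^ 1 := pow_le_pow_of_le_one hε.le hε1 (by norm_num)
      _ = ε := pow_one ε
  rw [abs_div, abs_mul, abs_pow, abs_pow, abs_of_pos hr0, abs_of_pos (by norm_num : (0:ℝ) < 4)]
  calc r ^ 2 * |U| ^ p / 4 ≤ r ^ 2 * (ε / r ^ 5) / 4 := by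
        gcongr; linarith
    _ = _ := by field_simp; norm_num

set_option maxHeartbeats 1600000 in
theorem grad {p : ℕ} (hp : 5 ≤ p) {m0 ε : ℝ} {u ut ur : ℝ → ℝ → ℝ} (hm0 : 1 ≤ m0)
    (H : Dat p m0 u ut ur) (hε : 0 < ε) (hε1 : ε ≤ 1)
    (hu : ∀ t r, m0 + |t| < r → |u t r| ≤ ε / r)
    (NR : ∀ x0 d τ T, m0 < x0 → 0 < d → 0 < τ → ¬ ∀ t, T ≤ t → ∀ r, x0 + t ≤ r → r ≤ x0 + d + t →
      τ ≤ (ut t r ^ 2 + ur t r ^ 2) * r ^ 3) :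
    ∀ x y, m0 < x → m0 < y → |aa u ut ur x y| ≤ 4 * ε := by
  set c : ℝ → ℝ → ℝ := fun x y => aa u ut ur x y - vv u x y / (2 * (x + y)) with hc
  set h : ℝ → ℝ → ℝ := fun x y => 3 / 4 * vv u x y / (x + y) ^ 2 - gg p u x y with hh
  have S := H.nsys (by linarith)
  have hvv : ∀ x y, m0 < x → m0 < y → |vv u x y| ≤ ε * ((x + y) / 2) := by
    intro x y hx hy
    have := hu _ _ (reg_of hx hy)
    have hs : 0 < (x + y) / 2 := by linarith
    simp only [vv]
    rw [abs_mul, abs_pow, abs_of_pos hs]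
    calc _ ≤ ((x + y) / 2) ^ 2 * (ε / ((x + y) / 2)) := by gcongr
      _ = _ := by field_simp
  have hdc : ∀ x y, m0 < x → m0 < y → HasDerivAt (fun y => c x y) (c x y / (2 * (x + y)) + h x y) y := by
    intro x y hx hy
    have hs : x + y ≠ 0 := by linarith
    have e1 : HasDerivAt (fun y => 2 * (x + y)) (2 * 1) y := ((hasDerivAt_id y).const_add x).const_mul 2
    refine ((S.da x y hx hy).fun_sub ((dvv_y H x y hx hy).fun_div e1 (by simpa using hs))).congr_deriv ?_
    simp only [hc, hh]
    field_simp
    ring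
  have hhb : ∀ x y, m0 < x → m0 < y → |h x y| ≤ (3 / 4 * ε) / (2 * (x + y)) + (2 * ε) / (x + y) ^ 3 := by
    intro x y hx hy
    have hs : 0 < x + y := by linarith
    refine (abs_sub _ _).trans (add_le_add ?_ ?_)
    · rw [abs_div, abs_mul, abs_of_pos (by norm_num : (0:ℝ) < 3 / 4), abs_of_pos (by positivity : 0 < (x + y) ^ 2)]
      calc _ ≤ 3 / 4 * (ε * ((x + y) / 2)) / (x + y) ^ 2 := by gcongr; exact hvv x y hx hy
        _ = _ := by field_simp
    · have := gg_bound hp (U := u ((y - x) / 2) ((x + y) / 2)) (r := (x + y) / 2) (by linarith) hε hε1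
        (hu _ _ (reg_of hx hy))
      rwa [show 2 * ((x + y) / 2) = x + y by ring] at this
  have claim : ∀ σ : ℝ, |σ| = 1 → ∀ x0 y0, m0 < x0 → m0 < y0 →
      σ * c x0 y0 ≤ 3 / 4 * ε + 2 * ε / (x0 + y0) ^ 2 := by
    intro σ hσ x0 y0 hx0 hy0
    by_contra hcon
    push Not at hcon
    set Q : ℝ → ℝ := fun x => (σ * c x y0 - 3 / 4 * ε - 2 * ε / (x + y0) ^ 2) / √(x + y0) with hQ
    have hs0 : 0 < x0 + y0 := by linarith
    have hQ0 : 0 < Q x0 := by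
      apply div_pos _ (Real.sqrt_pos.2 hs0)
      linarith
    have hcont : ContinuousAt Q x0 := by
      have c1 : ContinuousAt (fun x => c x y0) x0 := by
        obtain ⟨utt, utr, urr, h1, h2, h3, h4⟩ := H _ _ (reg_of hx0 hy0)
        have eT : HasDerivAt (fun x => (y0 - x) / 2) (-1 / 2) x0 :=
          ((hasDerivAt_id x0).const_sub y0).div_const 2
        have eR : HasDerivAt (fun x => (x + y0) / 2) (1 / 2) x0 :=
          ((hasDerivAt_id x0).add_const y0).div_const 2
        have k1 := (chain2 eT eR h1).continuousAt
        have k2 := (chain2 eT eR h2).continuousAt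
        have k3 := (chain2 eT eR h3).continuousAt
        have k4 := eR.continuousAt
        have k5 : ContinuousAt (fun x => 2 * (x + y0)) x0 := by fun_prop
        exact ((((k4.pow 2).mul (k3.sub k2)).div_const 2).add (k4.mul k1)).sub
          (((k4.pow 2).mul k1).div k5 (by positivity))
      have k6 : ContinuousAt (fun x => √(x + y0)) x0 := by fun_prop
      have k7 : ContinuousAt (fun x => (x + y0) ^ 2) x0 := by fun_prop
      exact (((c1.const_mul σ).sub continuousAt_const).sub
        (continuousAt_const.div k7 (by positivity))).div k6 (Real.sqrt_pos.2 hs0).ne'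
    set τ := Q x0 / 2 with hτ
    have hτ0 : 0 < τ := by positivity
    obtain ⟨d', hd', hd⟩ := Metric.eventually_nhds_iff.1 (hcont.eventually (lt_mem_nhds (show τ < Q x0 by linarith)))
    set d := d' / 2 with hdd
    have hd0 : 0 < d := by positivity
    refine NR x0 d (τ ^ 2) (max y0 (4 / τ ^ 2)) hx0 hd0 (by positivity) ?_
    intro t ht r hr1 hr2
    have ht1 : y0 ≤ t := (le_max_left _ _).trans ht
    have ht2 : 4 / τ ^ 2 ≤ t := (le_max_right _ _).trans ht
    have hx : m0 < r - t := by linarith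
    have hy : m0 < r + t := by linarith
    have hQx : τ < Q (r - t) := by
      apply hd
      rw [Real.dist_eq, abs_lt]; constructor <;> linarith
    have hl := line_int (r - t) y0 (r + t) (3 / 4 * ε) (2 * ε) (fun y => σ * c (r - t) y)
      (fun y => σ * h (r - t) y) (by linarith) (by linarith) (by positivity)
      (fun y hy1 hy2 => ((hdc (r - t) y hx (by linarith)).const_mul σ).congr_deriv (by ring))
      (fun y hy1 hy2 => by rw [abs_mul, hσ, one_mul]; exact hhb _ _ hx (by linarith))
    have hl2 := hQx.trans_le hl
    have es : r - t + (r + t) = 2 * r := by ring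
    have et : (r + t - (r - t)) / 2 = t := by ring
    have er : 2 * r / 2 = r := by ring
    simp only [es] at hl2
    have hr0 : 0 < r := by linarith
    have hq : 0 < √(2 * r) := Real.sqrt_pos.2 (by linarith)
    rw [lt_div_iff₀ hq] at hl2
    have hp1 : 0 ≤ 2 * ε / (2 * r) ^ 2 := by positivity
    have hbig : 2 ≤ τ * √(2 * r) := by
      have : 2 / τ ≤ √(2 * r) := by
        apply Real.le_sqrt_of_sq_le
        rw [div_pow]; norm_num; linarith
      rw [div_le_iff₀ hτ0] at this
      linarith
    have hce : c (r - t) (r + t) = r ^ 2 * (ur t r - ut t r) / 2 + 3 / 4 * (r * u t r) := by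
      simp only [hc, aa, vv, es, et, er]
      field_simp
      ring
    have hub : |r * u t r| ≤ 1 := by
      have := hu t r (by
        have : |t| = t := abs_of_nonneg (by linarith)
        rw [this]; linarith)
      rw [abs_mul, abs_of_pos hr0]
      calc r * |u t r| ≤ r * (ε / r) := by gcongr
        _ = ε := by field_simp
        _ ≤ 1 := hε1
    have hσ2 : |σ * c (r - t) (r + t)| = |c (r - t) (r + t)| := by rw [abs_mul, hσ, one_mul]
    have hge : τ * √(2 * r) ≤ |c (r - t) (r + t)| := by
      rw [← hσ2]
      refine le_trans ?_ (le_abs_self _)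
      linarith
    have hge2 : τ * √(2 * r) / 2 ≤ |r ^ 2 * (ur t r - ut t r) / 2| := by
      rw [hce] at hge
      have h1 := abs_add_le (r ^ 2 * (ur t r - ut t r) / 2) (3 / 4 * (r * u t r))
      have h2 : |3 / 4 * (r * u t r)| ≤ 3 / 4 := by
        rw [abs_mul, abs_of_pos (by norm_num : (0:ℝ) < 3 / 4)]; linarith
      linarith
    have hsq := pow_le_pow_left₀ (by positivity) hge2 2
    rw [sq_abs, div_pow, mul_pow, Real.sq_sqrt (by linarith)] at hsq
    have h5 : 2 * τ ^ 2 * r ≤ (ur t r - ut t r) ^ 2 * r ^ 3 * r := by nlinarith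
    have h6 := le_of_mul_le_mul_right h5 hr0
    have h7 : (ur t r - ut t r) ^ 2 * r ^ 3 ≤ (2 * (ut t r ^ 2 + ur t r ^ 2)) * r ^ 3 := by
      gcongr
      nlinarith [sq_nonneg (ur t r + ut t r)]
    linarith
  intro x y hx hy
  have hs : 2 ≤ x + y := by linarith
  have hs0 : 0 < x + y := by linarith
  have hcb : |c x y| ≤ 3 / 4 * ε + 2 * ε / (x + y) ^ 2 := by
    rw [abs_le]
    have h1 := claim 1 (by simp) x y hx hy
    have h2 := claim (-1) (by simp) x y hx hy
    constructor <;> linarith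
  have h2 : 2 * ε / (x + y) ^ 2 ≤ ε / 2 := by
    rw [div_le_iff₀ (by positivity)]
    have h4 : 4 ≤ (x + y) ^ 2 := by nlinarith
    nlinarith
  have h3 : |vv u x y / (2 * (x + y))| ≤ ε := by
    rw [abs_div, abs_of_pos (by positivity : 0 < 2 * (x + y)), div_le_iff₀ (by positivity)]
    have := hvv x y hx hy
    nlinarith
  have h4 : aa u ut ur x y = c x y + vv u x y / (2 * (x + y)) := by simp only [hc]; ring
  rw [h4]
  refine (abs_add_le _ _).trans ?_
  linarith

theorem dat_of_sol {p : ℕ} (hodd : Odd p) {R₀ : ℝ} {u : ℝ → ℝ → ℝ} (hsol : IsExtSol p 2 R₀ u) :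
    Dat p R₀ u (dtu u) (fun t r => deriv (u t) r) := by
  obtain ⟨hC, hE⟩ := hsol
  set Ω : Set (ℝ × ℝ) := {q : ℝ × ℝ | R₀ + |q.1| < q.2} with hΩ
  have hΩo : IsOpen Ω := by
    apply isOpen_lt <;> fun_prop
  set U : ℝ × ℝ → ℝ := fun q => u q.1 q.2 with hU
  have hCa : ∀ q ∈ Ω, ContDiffAt ℝ 2 U q := fun q hq => (hC q hq).contDiffAt (hΩo.mem_nhds hq)
  have hF : ∀ q ∈ Ω, HasFDerivAt U (fderiv ℝ U q) q := fun q hq =>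
    ((hCa q hq).differentiableAt (by norm_num)).hasFDerivAt
  have hut : ∀ t r, (t, r) ∈ Ω → dtu u t r = fderiv ℝ U (t, r) (1, 0) := by
    intro t r h
    have e : HasDerivAt (fun s : ℝ => (s, r)) ((1:ℝ), (0:ℝ)) t := (hasDerivAt_id t).prodMk (hasDerivAt_const t r)
    exact (HasFDerivAt.comp_hasDerivAt t (f := fun s : ℝ => (s, r)) (hF (t, r) h) e).deriv
  have hur : ∀ t r, (t, r) ∈ Ω → deriv (u t) r = fderiv ℝ U (t, r) (0, 1) := by
    intro t r h
    have e : HasDerivAt (fun s : ℝ => (t, s)) ((0:ℝ), (1:ℝ)) r := (hasDerivAt_const r t).prodMk (hasDerivAt_id r)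
    exact (HasFDerivAt.comp_hasDerivAt r (f := fun s : ℝ => (t, s)) (hF (t, r) h) e).deriv
  intro t r htr
  have hq : (t, r) ∈ Ω := htr
  have hev : ∀ᶠ q in nhds (t, r), q ∈ Ω := hΩo.mem_nhds hq
  set f2 := fderiv ℝ (fderiv ℝ U) (t, r) with hf2
  have h2 : HasFDerivAt (fderiv ℝ U) f2 (t, r) := by
    have : ContDiffAt ℝ 1 (fderiv ℝ U) (t, r) := (hCa _ hq).fderiv_right (by norm_num)
    exact (this.differentiableAt (by norm_num)).hasFDerivAt
  have hsym : f2 (1, 0) (0, 1) = f2 (0, 1) (1, 0) := by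
    have := (hCa _ hq).isSymmSndFDerivAt (by simp)
    exact this _ _
  have k1 : HasFDerivAt U (dtu u t r • ContinuousLinearMap.fst ℝ ℝ ℝ + deriv (u t) r • ContinuousLinearMap.snd ℝ ℝ ℝ) (t, r) := by
    refine (hF _ hq).congr_fderiv ?_
    rw [hut t r hq, hur t r hq]
    ext <;> simp
  have k2 : HasFDerivAt (fun q : ℝ × ℝ => dtu u q.1 q.2)
      (f2 (1, 0) (1, 0) • ContinuousLinearMap.fst ℝ ℝ ℝ + f2 (0, 1) (1, 0) • ContinuousLinearMap.snd ℝ ℝ ℝ) (t, r) := by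
    have : HasFDerivAt (fun q => fderiv ℝ U q (1, 0)) (f2.flip (1, 0)) (t, r) := by
      simpa using h2.clm_apply (hasFDerivAt_const ((1:ℝ), (0:ℝ)) (t, r))
    refine (this.congr_of_eventuallyEq ?_).congr_fderiv ?_
    · filter_upwards [hev] with q hq using hut q.1 q.2 hq
    · ext <;> simp
  have k3 : HasFDerivAt (fun q : ℝ × ℝ => deriv (u q.1) q.2)
      (f2 (0, 1) (1, 0) • ContinuousLinearMap.fst ℝ ℝ ℝ + f2 (0, 1) (0, 1) • ContinuousLinearMap.snd ℝ ℝ ℝ) (t, r) := by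
    have : HasFDerivAt (fun q => fderiv ℝ U q (0, 1)) (f2.flip (0, 1)) (t, r) := by
      simpa using h2.clm_apply (hasFDerivAt_const ((0:ℝ), (1:ℝ)) (t, r))
    refine (this.congr_of_eventuallyEq ?_).congr_fderiv ?_
    · filter_upwards [hev] with q hq using hur q.1 q.2 hq
    · rw [← hsym]; ext <;> simp
  refine ⟨_, _, _, k1, k2, k3, ?_⟩
  have e1 := (chain2 (f := fun t r => dtu u t r) (T := fun s => s) (Rr := fun _ => r) (s := t) (hasDerivAt_id t)
    (hasDerivAt_const t r) k2).deriv
  have e2 := (chain2 (f := fun t r => deriv (u t) r) (T := fun _ => t) (Rr := fun s => s) (s := r) (hasDerivAt_const r t)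
    (hasDerivAt_id r) k3).deriv
  have e3 := hE t r htr
  have e4 : deriv (deriv (u t)) r = deriv (fun s => deriv (u t) s) r := rfl
  rw [e4, e1, e2] at e3
  have e5 : |u t r| ^ (p - 1) * u t r = u t r ^ p := by
    obtain ⟨k, hk⟩ := hodd
    rw [hk, show 2 * k + 1 - 1 = 2 * k by omega, pow_mul, sq_abs, ← pow_mul, ← pow_succ]
  rw [e5] at e3
  simp only [mul_one, mul_zero, add_zero, zero_add] at e3
  exact e3

theorem tail_zero {f : ℝ → ℝ≥0∞} {R : ℝ} (h : ∫⁻ r in Ioi R, f r ≠ ⊤) :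
    Tendsto (fun ρ => ∫⁻ r in Ioi ρ, f r) atTop (nhds 0) := by
  have anti : Antitone (fun n : ℝ => Ioi n) := fun a b hab => Ioi_subset_Ioi hab
  have := tendsto_measure_iInter_atTop (μ := (volume.restrict (Ioi R)).withDensity f) (s := fun n : ℝ => Ioi n)
    (fun n => measurableSet_Ioi.nullMeasurableSet) anti ⟨R, by
      rw [withDensity_apply _ measurableSet_Ioi, Measure.restrict_restrict measurableSet_Ioi, inter_self]; exact h⟩
  have e : ⋂ n : ℝ, Ioi n = ∅ := by
    ext x; simp only [mem_iInter, mem_Ioi, mem_empty_iff_false, iff_false, not_forall, not_lt]; exact ⟨x, le_rfl⟩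
  rw [e, measure_empty] at this
  refine this.congr' ?_
  filter_upwards [eventually_ge_atTop R] with ρ hρ
  simp only [Function.comp]
  rw [withDensity_apply _ measurableSet_Ioi, Measure.restrict_restrict measurableSet_Ioi,
    inter_eq_left.2 (Ioi_subset_Ioi hρ)]

theorem energy_tail {R₀ C₀ : ℝ} {u : ℝ → ℝ → ℝ}
    (hdata : eH R₀ (u 0) (fun r => dtu u 0 r) < ⊤)
    (hbd : ∀ ρ : ℝ, R₀ ≤ ρ →
      eLL 2 8 ρ u + eLL 3 6 ρ u + supH ρ u
        ≤ ENNReal.ofReal C₀ * eH ρ (u 0) (fun r => dtu u 0 r)) (ε : ℝ) (hε : 0 < ε) :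
    ∃ M, ∀ ρ, M ≤ ρ → ∀ t, ∫⁻ r in Ioi (ρ + |t|), ENNReal.ofReal ((deriv (u t) r) ^ 2 * r ^ 3) ≤ ENNReal.ofReal (ε ^ 2) := by
  have hfin : (∫⁻ r in Ioi R₀, ENNReal.ofReal ((deriv (u 0) r) ^ 2 * r ^ 3)) +
      ∫⁻ r in Ioi R₀, ENNReal.ofReal ((dtu u 0 r) ^ 2 * r ^ 3) ≠ ⊤ := by
    intro h
    rw [eH, h, ENNReal.top_rpow_of_pos (by norm_num)] at hdata
    exact lt_irrefl _ hdata
  rw [ENNReal.add_ne_top] at hfin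
  have t1 := (tail_zero hfin.1).add (tail_zero hfin.2)
  have t2 : Tendsto (fun ρ => ENNReal.ofReal C₀ * eH ρ (u 0) (fun r => dtu u 0 r)) atTop (nhds 0) := by
    have := (ENNReal.continuous_rpow_const (y := (1 / 2 : ℝ))).tendsto (0 + 0 : ℝ≥0∞)
    have := this.comp t1
    have := ENNReal.Tendsto.const_mul (a := ENNReal.ofReal C₀) this (Or.inr ENNReal.ofReal_ne_top)
    simpa [eH, Function.comp_def] using this
  have hε' : 0 < ENNReal.ofReal ε := ENNReal.ofReal_pos.2 hε
  obtain ⟨M, hM⟩ := eventually_atTop.1 ((t2.eventually (gt_mem_nhds hε')).and (eventually_ge_atTop R₀))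
  refine ⟨M, fun ρ hρ t => ?_⟩
  obtain ⟨h1, h2⟩ := hM ρ hρ
  have h3 : eH (ρ + |t|) (u t) (fun r => dtu u t r) ≤ ENNReal.ofReal ε :=
    ((le_iSup (fun t : ℝ => eH (ρ + |t|) (u t) (fun r => dtu u t r)) t).trans
      (le_add_self.trans (hbd ρ h2))).trans h1.le
  have h4 : (∫⁻ r in Ioi (ρ + |t|), ENNReal.ofReal ((deriv (u t) r) ^ 2 * r ^ 3)) ^ (1 / 2 : ℝ) ≤ ENNReal.ofReal ε :=
    le_trans (ENNReal.rpow_le_rpow le_self_add (by norm_num)) h3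
  have h5 := ENNReal.rpow_le_rpow h4 (show (0:ℝ) ≤ 2 by norm_num)
  rw [← ENNReal.rpow_mul] at h5
  norm_num at h5
  rwa [ENNReal.ofReal_pow hε.le]

theorem cs_diff {f f' : ℝ → ℝ} {r1 r2 ε ρ : ℝ} (hε : 0 < ε) (hr1 : 0 < r1) (h12 : r1 ≤ r2) (hρ : ρ < r1)
    (hd : ∀ r, ρ < r → HasDerivAt f (f' r) r) (hc : ∀ r, ρ < r → ContinuousAt f' r)
    (hi : ∫⁻ r in Ioi ρ, ENNReal.ofReal ((f' r) ^ 2 * r ^ 3) ≤ ENNReal.ofReal (ε ^ 2)) :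
    |f r2 - f r1| ≤ 3 / 4 * (ε / r1) := by
  have hmem : ∀ r ∈ uIcc r1 r2, ρ < r ∧ 0 < r := by
    intro r hr
    rw [uIcc_of_le h12] at hr
    exact ⟨by linarith [hr.1], by linarith [hr.1]⟩
  have hcon : ContinuousOn f' (uIcc r1 r2) := fun r hr => (hc r (hmem r hr).1).continuousWithinAt
  have e1 : ∫ r in r1..r2, f' r = f r2 - f r1 :=
    intervalIntegral.integral_eq_sub_of_hasDerivAt (fun r hr => hd r (hmem r hr).1) hcon.intervalIntegrable
  have hcon2 : ContinuousOn (fun r => (f' r) ^ 2 * r ^ 3) (uIcc r1 r2) := by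
    exact (hcon.pow 2).mul (by fun_prop)
  have hcon3 : ContinuousOn (fun r : ℝ => 1 / r ^ 3) (uIcc r1 r2) := by
    intro r hr
    have := (hmem r hr).2
    exact (continuousAt_const.div (by fun_prop) (by positivity)).continuousWithinAt
  have e3 : ∫ r in r1..r2, 1 / r ^ 3 = (-1 / (2 * r2 ^ 2)) - (-1 / (2 * r1 ^ 2)) := by
    apply intervalIntegral.integral_eq_sub_of_hasDerivAt _ hcon3.intervalIntegrable
    intro r hr
    have := (hmem r hr).2
    have e : HasDerivAt (fun r : ℝ => 2 * r ^ 2) (2 * (2 * r)) r := by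
      have := ((hasDerivAt_id r).fun_pow 2).const_mul 2
      refine this.congr_deriv (by simp)
    refine ((hasDerivAt_const r (-1:ℝ)).fun_div e (by positivity)).congr_deriv ?_
    field_simp
    ring
  have e2 : ∫ r in r1..r2, (f' r) ^ 2 * r ^ 3 ≤ ε ^ 2 := by
    rw [intervalIntegral.integral_of_le h12]
    rw [← ENNReal.ofReal_le_ofReal_iff (by positivity)]
    rw [ofReal_integral_eq_lintegral_ofReal]
    · refine le_trans (lintegral_mono_set ?_) hi
      intro r hr; exact lt_trans hρ hr.1
    · rw [uIcc_of_le h12] at hcon2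
      exact (hcon2.integrableOn_Icc).mono_set Ioc_subset_Icc_self
    · filter_upwards [ae_restrict_mem measurableSet_Ioc] with r hr
      have : 0 < r := by linarith [hr.1]
      simp only [Pi.zero_apply]
      positivity
  set lam := 1 / (r1 * ε) with hlam
  have hl0 : 0 < lam := by positivity
  have hb : ‖∫ r in r1..r2, f' r‖ ≤ ∫ r in r1..r2, (lam / 2 * ((f' r) ^ 2 * r ^ 3) + 1 / (2 * lam) * (1 / r ^ 3)) := by
    apply intervalIntegral.norm_integral_le_of_norm_le h12
    · refine Eventually.of_forall fun r hr => ?_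
      have hr0 : 0 < r := by linarith [hr.1]
      rw [Real.norm_eq_abs]
      have hpos : 0 ≤ (lam * |f' r| * r ^ 3 - 1) ^ 2 := sq_nonneg _
      have e : lam / 2 * ((f' r) ^ 2 * r ^ 3) + 1 / (2 * lam) * (1 / r ^ 3) - |f' r| =
          (lam * |f' r| * r ^ 3 - 1) ^ 2 / (2 * lam * r ^ 3) := by
        rw [← sq_abs (f' r)]
        field_simp
        ring
      have : 0 ≤ (lam * |f' r| * r ^ 3 - 1) ^ 2 / (2 * lam * r ^ 3) := by positivity
      linarith
    · exact (hcon2.intervalIntegrable.const_mul _).add (hcon3.intervalIntegrable.const_mul _)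
  rw [e1, intervalIntegral.integral_add (hcon2.intervalIntegrable.const_mul _) (hcon3.intervalIntegrable.const_mul _),
    intervalIntegral.integral_const_mul, intervalIntegral.integral_const_mul, e3, Real.norm_eq_abs] at hb
  have hr2 : 0 < r2 := by linarith
  have h5 : -1 / (2 * r2 ^ 2) ≤ 0 := by
    apply div_nonpos_of_nonpos_of_nonneg <;> [norm_num; positivity]
  calc |f r2 - f r1| ≤ lam / 2 * ε ^ 2 + 1 / (2 * lam) * (1 / (2 * r1 ^ 2)) := by
        refine hb.trans ?_
        have : (-1 / (2 * r2 ^ 2)) - (-1 / (2 * r1 ^ 2)) ≤ 1 / (2 * r1 ^ 2) := by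
          have e0 : -1 / (2 * r1 ^ 2) = -(1 / (2 * r1 ^ 2)) := by ring
          linarith
        gcongr
    _ = _ := by rw [hlam]; field_simp; ring

theorem Dat.cont_u {p : ℕ} {m0 : ℝ} {u ut ur : ℝ → ℝ → ℝ} (H : Dat p m0 u ut ur) (t r : ℝ) (h : m0 + |t| < r) :
    HasDerivAt (fun r => u t r) (ur t r) r ∧ HasDerivAt (fun t => u t r) (ut t r) t ∧
    ContinuousAt (fun r => ur t r) r ∧ ContinuousAt (fun r => ut t r) r := by
  obtain ⟨utt, utr, urr, h1, h2, h3, h4⟩ := H t r h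
  have k1 := chain2 (f := u) (T := fun _ => t) (Rr := fun s => s) (s := r) (hasDerivAt_const r t) (hasDerivAt_id r) h1
  have k2 := chain2 (f := u) (T := fun s => s) (Rr := fun _ => r) (s := t) (hasDerivAt_id t) (hasDerivAt_const t r) h1
  have k3 := chain2 (f := ur) (T := fun _ => t) (Rr := fun s => s) (s := r) (hasDerivAt_const r t) (hasDerivAt_id r) h3
  have k4 := chain2 (f := ut) (T := fun _ => t) (Rr := fun s => s) (s := r) (hasDerivAt_const r t) (hasDerivAt_id r) h2
  exact ⟨k1.congr_deriv (by ring), k2.congr_deriv (by ring), k3.continuousAt, k4.continuousAt⟩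

theorem decay {p : ℕ} {R₀ C₀ : ℝ} (hR₀ : 0 < R₀) {u : ℝ → ℝ → ℝ}
    (H : Dat p R₀ u (dtu u) (fun t r => deriv (u t) r))
    (hdata : eH R₀ (u 0) (fun r => dtu u 0 r) < ⊤)
    (hbd : ∀ ρ : ℝ, R₀ ≤ ρ →
      eLL 2 8 ρ u + eLL 3 6 ρ u + supH ρ u
        ≤ ENNReal.ofReal C₀ * eH ρ (u 0) (fun r => dtu u 0 r)) (ε : ℝ) (hε : 0 < ε) :
    ∃ M, ∀ ρ, M ≤ ρ → ∀ t r, ρ + |t| < r → |u t r| ≤ ε / r := by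
  obtain ⟨M, hM⟩ := energy_tail hdata hbd ε hε
  refine ⟨max M R₀, fun ρ hρ t r htr => ?_⟩
  have hρM : M ≤ ρ := (le_max_left _ _).trans hρ
  have hρR : R₀ ≤ ρ := (le_max_right _ _).trans hρ
  have hLL : (∫⁻ t : ℝ, (∫⁻ r in Ioi (R₀ + |t|), ENNReal.ofReal (|u t r| ^ (8:ℝ) * r ^ 3)) ^ ((2:ℝ) / 8)) ≠ ⊤ := by
    intro htop
    have h1 : eLL 2 8 R₀ u < ⊤ :=
      lt_of_le_of_lt ((le_self_add.trans le_self_add).trans (hbd R₀ le_rfl))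
        (ENNReal.mul_lt_top ENNReal.ofReal_lt_top hdata)
    rw [eLL, htop, ENNReal.top_rpow_of_pos (by norm_num)] at h1
    exact lt_irrefl _ h1
  -- good times
  have good : ∀ t r, ρ + |t| < r →
      (∫⁻ r in Ioi (R₀ + |t|), ENNReal.ofReal (|u t r| ^ (8:ℝ) * r ^ 3)) ≠ ⊤ → |u t r| ≤ ε / r := by
    intro t r htr hfin
    have hr0 : 0 < r := by linarith [abs_nonneg t]
    by_contra hcon
    push Not at hcon
    set κ := ε / r * (1 / 4) with hκ
    have hκ0 : 0 < κ := by positivity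
    have hbig : ∀ r2, r ≤ r2 → κ ≤ |u t r2| := by
      intro r2 hr2
      have := cs_diff (f := u t) (f' := fun r => deriv (u t) r) hε hr0 hr2 htr
        (fun s hs => (H.cont_u t s (by linarith)).1) (fun s hs => (H.cont_u t s (by linarith)).2.2.1) (hM ρ hρM t)
      have h2 := abs_sub_abs_le_abs_sub (u t r) (u t r2)
      rw [abs_sub_comm] at h2
      linarith
    apply hfin
    rw [eq_top_iff]
    have hsub : Ioi r ⊆ Ioi (R₀ + |t|) := Ioi_subset_Ioi (by linarith)
    refine le_trans ?_ (lintegral_mono_set hsub)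
    have hc : ∫⁻ s in Ioi r, ENNReal.ofReal (κ ^ (8:ℝ) * r ^ 3) ≤ ∫⁻ s in Ioi r, ENNReal.ofReal (|u t s| ^ (8:ℝ) * s ^ 3) := by
      apply setLIntegral_mono' measurableSet_Ioi
      intro s hs
      have hs' : r < s := hs
      apply ENNReal.ofReal_le_ofReal
      have := hbig s hs'.le
      gcongr
    refine le_trans ?_ hc
    rw [setLIntegral_const, Real.volume_Ioi, ENNReal.mul_top]
    exact (ENNReal.ofReal_pos.2 (by positivity)).ne'
  -- density
  refine le_of_forall_pos_le_add fun δ hδ => ?_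
  have hcont := (H.cont_u t r (by linarith)).2.1.continuousAt
  obtain ⟨d, hd, hdd⟩ := Metric.eventually_nhds_iff.1 ((Metric.continuousAt_iff'.1 hcont δ hδ).and
    ((show ∀ᶠ s in nhds t, ρ + |s| < r from
      (show ContinuousAt (fun s : ℝ => ρ + |s|) t by fun_prop).eventually (gt_mem_nhds htr))))
  have : ∃ s ∈ Ioo (t - d) (t + d), (∫⁻ r in Ioi (R₀ + |s|), ENNReal.ofReal (|u s r| ^ (8:ℝ) * r ^ 3)) ≠ ⊤ := by
    by_contra hcon
    push Not at hcon
    apply hLL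
    rw [eq_top_iff]
    refine le_trans ?_ (setLIntegral_le_lintegral (Ioo (t - d) (t + d)) _)
    have hc : ∫⁻ s in Ioo (t - d) (t + d), ⊤ ≤ ∫⁻ s in Ioo (t - d) (t + d),
        (∫⁻ r in Ioi (R₀ + |s|), ENNReal.ofReal (|u s r| ^ (8:ℝ) * r ^ 3)) ^ ((2:ℝ) / 8) := by
      apply setLIntegral_mono' measurableSet_Ioo
      intro s hs
      rw [hcon s hs, ENNReal.top_rpow_of_pos (by norm_num)]
    refine le_trans ?_ hc
    rw [setLIntegral_const, Real.volume_Ioo, ENNReal.top_mul]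
    exact (ENNReal.ofReal_pos.2 (by linarith)).ne'
  obtain ⟨s, hs, hsf⟩ := this
  have h1 := hdd (y := s) (by rw [Real.dist_eq, abs_lt]; constructor <;> linarith [hs.1, hs.2])
  have h2 := good s r h1.2 hsf
  have h3 := h1.1
  rw [Real.dist_eq, abs_sub_comm] at h3
  have h4 := abs_sub_abs_le_abs_sub (u t r) (u s r)
  linarith

theorem nr_up {R m0 : ℝ} {Ut Ur : ℝ → ℝ → ℝ} (hR : 0 < R) (hm : R ≤ m0)
    (hi : ∀ t, IntegrableOn (fun r => (Ut t r ^ 2 + Ur t r ^ 2) * r ^ 3) (Ioi (R + |t|)))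
    (hv : Tendsto (fun t => ∫ r in Ioi (R + |t|), (Ut t r ^ 2 + Ur t r ^ 2) * r ^ 3) atTop (nhds 0)) :
    ∀ x0 d τ T, m0 < x0 → 0 < d → 0 < τ → ¬ ∀ t, T ≤ t → ∀ r, x0 + t ≤ r → r ≤ x0 + d + t →
      τ ≤ (Ut t r ^ 2 + Ur t r ^ 2) * r ^ 3 := by
  intro x0 d τ T hx0 hd hτ hcon
  have : ∀ᶠ t in atTop, τ * d ≤ ∫ r in Ioi (R + |t|), (Ut t r ^ 2 + Ur t r ^ 2) * r ^ 3 := by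
    filter_upwards [eventually_ge_atTop T, eventually_ge_atTop 0] with t hT h0
    have hsub : Icc (x0 + t) (x0 + d + t) ⊆ Ioi (R + |t|) := by
      intro r hr
      rw [mem_Ioi, abs_of_nonneg h0]; linarith [hr.1]
    have h1 : ∫ r in Icc (x0 + t) (x0 + d + t), τ ≤
        ∫ r in Icc (x0 + t) (x0 + d + t), (Ut t r ^ 2 + Ur t r ^ 2) * r ^ 3 := by
      apply setIntegral_mono_on _ ((hi t).mono_set hsub) measurableSet_Icc
      · intro r hr; exact hcon t hT r hr.1 hr.2
      · exact integrableOn_const (by simp)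
    have h2 : ∫ r in Icc (x0 + t) (x0 + d + t), τ = τ * d := by
      rw [setIntegral_const, Measure.real, Real.volume_Icc, ENNReal.toReal_ofReal (by linarith)]
      simp only [smul_eq_mul]; ring
    have h3 : ∫ r in Icc (x0 + t) (x0 + d + t), (Ut t r ^ 2 + Ur t r ^ 2) * r ^ 3 ≤
        ∫ r in Ioi (R + |t|), (Ut t r ^ 2 + Ur t r ^ 2) * r ^ 3 := by
      apply setIntegral_mono_set (hi t) _ hsub.eventuallyLE
      filter_upwards [ae_restrict_mem measurableSet_Ioi] with r hr
      have : 0 < r := by have : R + |t| < r := hr; linarith [abs_nonneg t]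
      simp only [Pi.zero_apply]
      positivity
    linarith
  have h := ge_of_tendsto hv this
  nlinarith

theorem en_int {p : ℕ} {R₀ C₀ : ℝ} (hR₀ : 0 < R₀) {u : ℝ → ℝ → ℝ}
    (H : Dat p R₀ u (dtu u) (fun t r => deriv (u t) r))
    (hdata : eH R₀ (u 0) (fun r => dtu u 0 r) < ⊤)
    (hbd : ∀ ρ : ℝ, R₀ ≤ ρ →
      eLL 2 8 ρ u + eLL 3 6 ρ u + supH ρ u
        ≤ ENNReal.ofReal C₀ * eH ρ (u 0) (fun r => dtu u 0 r)) (t : ℝ) :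
    IntegrableOn (fun r => (dtu u t r ^ 2 + deriv (u t) r ^ 2) * r ^ 3) (Ioi (R₀ + |t|)) := by
  have h3 : eH (R₀ + |t|) (u t) (fun r => dtu u t r) < ⊤ :=
    lt_of_le_of_lt ((le_iSup (fun t : ℝ => eH (R₀ + |t|) (u t) (fun r => dtu u t r)) t).trans
      (le_add_self.trans (hbd R₀ le_rfl))) (ENNReal.mul_lt_top ENNReal.ofReal_lt_top hdata)
  have hfin : (∫⁻ r in Ioi (R₀ + |t|), ENNReal.ofReal ((deriv (u t) r) ^ 2 * r ^ 3)) +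
      ∫⁻ r in Ioi (R₀ + |t|), ENNReal.ofReal ((dtu u t r) ^ 2 * r ^ 3) ≠ ⊤ := by
    intro h
    rw [eH, h, ENNReal.top_rpow_of_pos (by norm_num)] at h3
    exact lt_irrefl _ h3
  rw [ENNReal.add_ne_top] at hfin
  have gen : ∀ f : ℝ → ℝ, (∀ r, R₀ + |t| < r → ContinuousAt f r) →
      (∫⁻ r in Ioi (R₀ + |t|), ENNReal.ofReal (f r ^ 2 * r ^ 3)) ≠ ⊤ →
      IntegrableOn (fun r => f r ^ 2 * r ^ 3) (Ioi (R₀ + |t|)) := by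
    intro f hf hfi
    have hc : ContinuousOn (fun r => f r ^ 2 * r ^ 3) (Ioi (R₀ + |t|)) := by
      have : ContinuousOn f (Ioi (R₀ + |t|)) := fun r hr => (hf r hr).continuousWithinAt
      exact (this.pow 2).mul (by fun_prop)
    refine (lintegral_ofReal_ne_top_iff_integrable (hc.aestronglyMeasurable measurableSet_Ioi) ?_).1 hfi
    filter_upwards [ae_restrict_mem measurableSet_Ioi] with r hr
    have : 0 < r := by have : R₀ + |t| < r := hr; linarith [abs_nonneg t]
    simp only [Pi.zero_apply]
    positivity
  have := (gen _ (fun r hr => (H.cont_u t r hr).2.2.2) hfin.2).add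
    (gen _ (fun r hr => (H.cont_u t r hr).2.2.1) hfin.1)
  refine this.congr (Eventually.of_forall fun r => ?_)
  simp only [Pi.add_apply]; ring

theorem Dat.mono {p : ℕ} {m0 m1 : ℝ} {u ut ur : ℝ → ℝ → ℝ} (H : Dat p m0 u ut ur) (h : m0 ≤ m1) :
    Dat p m1 u ut ur := fun t r htr => H t r (by linarith)

theorem main_bound {p : ℕ} (hp : 5 ≤ p) {R₀ C₀ : ℝ} (hR₀ : 0 < R₀) {u : ℝ → ℝ → ℝ}
    (H : Dat p R₀ u (dtu u) (fun t r => deriv (u t) r))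
    (hdata : eH R₀ (u 0) (fun r => dtu u 0 r) < ⊤)
    (hbd : ∀ ρ : ℝ, R₀ ≤ ρ →
      eLL 2 8 ρ u + eLL 3 6 ρ u + supH ρ u
        ≤ ENNReal.ofReal C₀ * eH ρ (u 0) (fun r => dtu u 0 r))
    (hvan : ExtEnergyVanishes R₀ u) :
    ∃ m0, 1 ≤ m0 ∧ R₀ < m0 ∧ (∀ t r, m0 + |t| < r → |u t r| ≤ 1 / r) ∧
      ∀ m, m0 < m → PB (aa u (dtu u) (fun t r => deriv (u t) r)) (bb u (dtu u) (fun t r => deriv (u t) r)) m (22 / m ^ 2) := by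
  have hint := en_int hR₀ H hdata hbd
  have key : ∀ ε, 0 < ε → ε ≤ 1 → ∀ m0, 1 ≤ m0 → R₀ < m0 → (∀ t r, m0 + |t| < r → |u t r| ≤ ε / r) →
      ∀ x y, m0 < x → m0 < y → |aa u (dtu u) (fun t r => deriv (u t) r) x y| ≤ 4 * ε ∧
        |bb u (dtu u) (fun t r => deriv (u t) r) x y| ≤ 4 * ε := by
    intro ε hε hε1 m0 h1 hm hu x y hx hy
    constructor
    · exact grad hp h1 (H.mono hm.le) hε hε1 hu (nr_up hR₀ hm.le hint hvan.1) x y hx hy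
    · have hN := nr_up (R := R₀) (m0 := m0) (Ut := fun t r => - dtu u (-t) r) (Ur := fun t r => deriv (u (-t)) r) hR₀ hm.le
        (fun t => by simpa using hint (-t)) (by
          have := hvan.2.comp tendsto_neg_atTop_atBot
          refine this.congr fun t => ?_
          simp [Function.comp])
      have := grad hp h1 (H.mono hm.le).reflect hε hε1 (fun t r htr => hu (-t) r (by simpa using htr)) hN y x hy hx
      refine le_of_eq_of_le ?_ this
      congr 1
      simp only [aa, bb]
      rw [show -((x - y) / 2) = (y - x) / 2 by ring, add_comm y x]
      ring
  obtain ⟨M, hM⟩ := decay hR₀ H hdata hbd 1 one_pos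
  set m0 := max M (max 1 (R₀ + 1)) with hm0
  have a1 : M ≤ m0 := le_max_left _ _
  have a2 : 1 ≤ m0 := (le_max_left _ _).trans (le_max_right _ _)
  have a3 : R₀ < m0 := lt_of_lt_of_le (by linarith) ((le_max_right 1 (R₀ + 1)).trans (le_max_right M _))
  refine ⟨m0, a2, a3, hM m0 a1, fun m hm => ?_⟩
  have := lin_bound (N := 2) (B := 4) (by norm_num) (by linarith) ((H.mono a3.le).nsys (by linarith))
    (fun x y hx hy => by
      have := gg_bound hp (U := u ((y - x) / 2) ((x + y) / 2)) (r := (x + y) / 2) (by linarith) one_pos le_rfl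
        (hM m0 a1 _ _ (reg_of hx hy))
      rw [show 2 * ((x + y) / 2) = x + y by ring] at this
      simpa [gg] using this)
    (fun m hm x y hx hy => by
      have := key 1 one_pos le_rfl m0 a2 a3 (hM m0 a1) x y (by linarith) (by linarith)
      simpa using this)
    (fun ε hε => by
      set e := min 1 (ε / 4) with he
      have e0 : 0 < e := lt_min one_pos (by linarith)
      have e1 : e ≤ 1 := min_le_left _ _
      have e2 : e ≤ ε / 4 := min_le_right _ _
      obtain ⟨M', hM'⟩ := decay hR₀ H hdata hbd e e0
      refine ⟨max M' m0 + 1, fun m hm x y hx hy => ?_⟩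
      have b1 := le_max_left M' m0
      have b2 := le_max_right M' m0
      have := key e e0 e1 (max M' m0) (by linarith) (by linarith) (hM' _ b1) x y (by linarith) (by linarith)
      exact ⟨by linarith [this.1], by linarith [this.2]⟩) m hm
  rw [show (22:ℝ) / m ^ 2 = 11 * (2 / m ^ 2) by ring]
  exact this

theorem shift_bd {p : ℕ} {m0 : ℝ} {u ut ur : ℝ → ℝ → ℝ} (H : Dat p m0 u ut ur)
    (hP : ∀ m, m0 < m → PB (aa u ut ur) (bb u ut ur) m (22 / m ^ 2)) (x y h m : ℝ) (hm : m0 < m)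
    (hx : m ≤ x - |h|) (hy : m ≤ y - |h|) :
    |vv u (x - h) (y + h) - vv u x y| ≤ 44 / m ^ 2 * |h| := by
  have hd : ∀ s ∈ Icc (-|h|) |h|, HasDerivWithinAt (fun s => vv u (x - s) (y + s))
      (bb u ut ur (x - s) (y + s) - aa u ut ur (x - s) (y + s)) (Icc (-|h|) |h|) s := by
    intro s hs
    have hx' : m0 < x - s := by linarith [hs.2]
    have hy' : m0 < y + s := by linarith [hs.1]
    apply HasDerivAt.hasDerivWithinAt
    obtain ⟨utt, utr, urr, h1, -, -, -⟩ := H _ _ (reg_of hx' hy')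
    have eT : HasDerivAt (fun s => ((y + s) - (x - s)) / 2) 1 s :=
      ((((hasDerivAt_id s).const_add y).fun_sub ((hasDerivAt_id s).const_sub x)).div_const 2).congr_deriv (by norm_num)
    have eR : HasDerivAt (fun s => ((x - s) + (y + s)) / 2) 0 s :=
      ((((hasDerivAt_id s).const_sub x).fun_add ((hasDerivAt_id s).const_add y)).div_const 2).congr_deriv (by norm_num)
    refine ((eR.fun_pow 2).fun_mul (chain2 eT eR h1)).congr_deriv ?_
    simp only [aa, bb]; push_cast; ring
  have hb : ∀ s ∈ Icc (-|h|) |h|, ‖bb u ut ur (x - s) (y + s) - aa u ut ur (x - s) (y + s)‖ ≤ 44 / m ^ 2 := by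
    intro s hs
    have := hP m hm (x - s) (y + s) (by linarith [hs.2]) (by linarith [hs.1])
    rw [Real.norm_eq_abs]
    refine (abs_sub _ _).trans ?_
    rw [show (44:ℝ) / m ^ 2 = 22 / m ^ 2 + 22 / m ^ 2 by ring]
    linarith [this.1, this.2]
  have := (convex_Icc (-|h|) |h|).norm_image_sub_le_of_norm_hasDerivWithin_le hd hb
    (x := 0) (y := h) ⟨by simp, by simp⟩ ⟨neg_abs_le h, le_abs_self h⟩
  simpa using this

theorem g_lip {p : ℕ} (hp : 5 ≤ p) {r U V : ℝ} (hr : 1 ≤ r) (hU : |U| ≤ 1 / r) (hV : |V| ≤ 1 / r) :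
    |r ^ 2 * U ^ p / 4 - r ^ 2 * V ^ p / 4| ≤ 2 * p / (2 * r) ^ 3 * |r ^ 2 * U - r ^ 2 * V| := by
  have hr0 : 0 < r := by linarith
  have h1 := abs_pow_sub_pow_le U V p
  have h2 : max |U| |V| ^ (p - 1) ≤ 1 / r ^ 3 := by
    have h3 : max |U| |V| ≤ 1 / r := max_le hU hV
    have h0 : 0 ≤ max |U| |V| := (abs_nonneg U).trans (le_max_left _ _)
    have h4 : 1 / r ≤ 1 := (div_le_one hr0).2 hr
    calc max |U| |V| ^ (p - 1) ≤ (1 / r) ^ (p - 1) := by gcongr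
      _ ≤ (1 / r) ^ 3 := pow_le_pow_of_le_one (by positivity) h4 (by omega)
      _ = 1 / r ^ 3 := by rw [div_pow, one_pow]
  rw [show r ^ 2 * U ^ p / 4 - r ^ 2 * V ^ p / 4 = r ^ 2 / 4 * (U ^ p - V ^ p) by ring, abs_mul,
    abs_of_pos (by positivity : 0 < r ^ 2 / 4), ← mul_sub, abs_mul, abs_of_pos (by positivity : 0 < r ^ 2)]
  calc r ^ 2 / 4 * |U ^ p - V ^ p| ≤ r ^ 2 / 4 * (|U - V| * p * (1 / r ^ 3)) := by
        gcongr
        exact h1.trans (by gcongr)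
    _ = 2 * p / (2 * r) ^ 3 * (r ^ 2 * |U - V|) := by field_simp; ring

theorem stat {p : ℕ} (hp : 5 ≤ p) {m0 : ℝ} {u ut ur : ℝ → ℝ → ℝ} (h1 : 1 ≤ m0) (H : Dat p m0 u ut ur)
    (hu : ∀ t r, m0 + |t| < r → |u t r| ≤ 1 / r)
    (hP : ∀ m, m0 < m → PB (aa u ut ur) (bb u ut ur) m (22 / m ^ 2)) :
    ∃ m1, m0 < m1 ∧ ∀ h r, |h| ≤ 1 → m1 < r → u h r = u 0 r := by
  set m1 := 2 * (m0 + 1) + 88 * p with hm1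
  have hp0 : (0:ℝ) ≤ p := by positivity
  refine ⟨m1, by linarith, fun h r hh hr => ?_⟩
  have S := H.nsys (by linarith)
  have S2 := (S.shift h (m1 := m1) (by linarith)).sub (S.mono (m1 := m1) (by linarith))
  have hl := le_abs_self h
  have hl' := neg_abs_le h
  have := uniq (μ := 110) (D := 2 * p) (by linarith) S2 (by linarith) (by linarith) ?_ ?_ ?_ r r hr hr
  · simp only [vv] at this
    have e1 : (r - h + (r + h)) / 2 = r := by ring
    have e2 : (r + h - (r - h)) / 2 = h := by ring
    have e3 : (r + r) / 2 = r := by ring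
    have e4 : (r - r) / 2 = 0 := by ring
    rw [e1, e2, e3, e4, ← mul_sub] at this
    have hr2 : r ^ 2 ≠ 0 := by
      have : 0 < r := by linarith
      positivity
    have := (mul_eq_zero.1 this).resolve_left hr2
    linarith
  · intro x y hx hy
    have k1 := hu _ _ (reg_of (m0 := m0) (x := x - h) (y := y + h) (by linarith) (by linarith))
    have k2 := hu _ _ (reg_of (m0 := m0) (x := x) (y := y) (by linarith) (by linarith))
    have e1 : (x - h + (y + h)) / 2 = (x + y) / 2 := by ring
    simp only [gg, vv]
    rw [e1] at k1 ⊢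
    have := g_lip hp (by linarith) k1 k2
    rwa [show 2 * ((x + y) / 2) = x + y by ring] at this
  · intro m hm x y hx hy
    have k1 := hP (m / 2) (by linarith) (x - h) (y + h) (by linarith) (by linarith)
    have k2 := hP m (by linarith) x y (by linarith) (by linarith)
    have hm0 : 0 < m := by linarith
    have e : 110 / m ^ 2 = 22 / (m / 2) ^ 2 + 22 / m ^ 2 := by field_simp; norm_num
    rw [e]
    exact ⟨(abs_sub _ _).trans (by linarith [k1.1, k2.1]), (abs_sub _ _).trans (by linarith [k1.2, k2.2])⟩
  · intro x y hx hy
    have hlim : Tendsto (fun t : ℝ => 44 / t ^ 2) atTop (nhds 0) :=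
      tendsto_const_nhds.div_atTop (tendsto_pow_atTop (by norm_num))
    refine squeeze_zero_norm' ?_ hlim
    filter_upwards [eventually_ge_atTop (m0 + 1)] with t ht
    have := shift_bd H hP (x + t) (y + t) h t (by linarith) (by linarith) (by linarith)
    rw [Real.norm_eq_abs]
    refine this.trans ?_
    have : 0 ≤ 44 / t ^ 2 := by positivity
    nlinarith

theorem vlim {p : ℕ} {m0 : ℝ} {u ut ur : ℝ → ℝ → ℝ} (h1 : 1 ≤ m0) (H : Dat p m0 u ut ur)
    (hP : ∀ m, m0 < m → PB (aa u ut ur) (bb u ut ur) m (22 / m ^ 2)) :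
    ∃ l, Tendsto (fun r => r ^ 2 * u 0 r) atTop (nhds l) := by
  have S := H.nsys (by linarith)
  apply cauchySeq_tendsto_of_complete
  have e : ∀ r, vv u r r = r ^ 2 * u 0 r := by
    intro r; simp [vv]
  have key : ∀ N, m0 < N → ∀ n, N ≤ n → |N ^ 2 * u 0 N - n ^ 2 * u 0 n| ≤ 44 / N := by
    intro N hN n hn
    have := slice_diff (by linarith) S hP N N (n - N) hN hN (by linarith)
    rw [min_self, show N + (n - N) = n by ring, e, e] at this
    linarith
  rw [Metric.cauchySeq_iff']
  intro ε hε
  have hlim : Tendsto (fun t : ℝ => 44 / t) atTop (nhds 0) := tendsto_const_nhds.div_atTop tendsto_id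
  obtain ⟨N, hN1, hN2⟩ := ((hlim.eventually (gt_mem_nhds hε)).and (eventually_gt_atTop m0)).exists
  refine ⟨N, fun n hn => ?_⟩
  rw [dist_comm, Real.dist_eq]
  exact lt_of_le_of_lt (key N hN2 n hn) hN1

theorem zero_case {p : ℕ} (hp : 5 ≤ p) {m0 : ℝ} {u ut ur : ℝ → ℝ → ℝ} (h1 : 1 ≤ m0) (H : Dat p m0 u ut ur)
    (hu : ∀ t r, m0 + |t| < r → |u t r| ≤ 1 / r)
    (hP : ∀ m, m0 < m → PB (aa u ut ur) (bb u ut ur) m (22 / m ^ 2))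
    (hl : Tendsto (fun r => r ^ 2 * u 0 r) atTop (nhds 0)) :
    ∃ m1, m0 < m1 ∧ ∀ r, m1 < r → u 0 r = 0 := by
  set m1 := m0 + 1 + 88 * p with hm1
  have hp0 : (0:ℝ) ≤ p := by positivity
  refine ⟨m1, by linarith, fun r hr => ?_⟩
  have S := (H.nsys (by linarith)).mono (m1 := m1) (by linarith)
  have := uniq (μ := 22) (D := 2 * p) (by linarith) S (by linarith) (by linarith) ?_
    (fun m hm => hP m (by linarith)) ?_ r r hr hr
  · simp only [vv] at this
    have e3 : (r + r) / 2 = r := by ring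
    have e4 : (r - r) / 2 = 0 := by ring
    rw [e3, e4] at this
    have hr2 : r ^ 2 ≠ 0 := by
      have : 0 < r := by linarith
      positivity
    exact (mul_eq_zero.1 this).resolve_left hr2
  · intro x y hx hy
    have k2 := hu _ _ (reg_of (m0 := m0) (x := x) (y := y) (by linarith) (by linarith))
    have := g_lip (V := 0) hp (by linarith) k2 (by rw [abs_zero]; have : 0 < (x + y) / 2 := by linarith
                                                   positivity)
    rw [show 2 * ((x + y) / 2) = x + y by ring, zero_pow (by omega)] at this
    simpa [gg, vv] using this
  · intro x y hx hy
    set h := (y - x) / 2 with hh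
    set r := (x + y) / 2 with hr
    have hlim : Tendsto (fun t : ℝ => 44 / t ^ 2 * |h|) atTop (nhds (0 * |h|)) :=
      (tendsto_const_nhds.div_atTop (tendsto_pow_atTop (by norm_num))).mul_const _
    rw [zero_mul] at hlim
    have h2 : Tendsto (fun t => vv u (x + t) (y + t) - (r + t) ^ 2 * u 0 (r + t)) atTop (nhds 0) := by
      refine squeeze_zero_norm' ?_ hlim
      filter_upwards [eventually_ge_atTop (m0 + 1)] with t ht
      have hrh := reg_of hx hy
      have := shift_bd H hP (r + t) (r + t) h t (by linarith) (by linarith) (by linarith)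
      rw [Real.norm_eq_abs]
      refine le_of_eq_of_le ?_ this
      congr 1
      rw [show r + t - h = x + t by rw [hr, hh]; ring, show r + t + h = y + t by rw [hr, hh]; ring]
      simp [vv]
    have h3 := hl.comp (tendsto_atTop_add_const_left atTop r tendsto_id)
    have := h2.add h3
    rw [zero_add] at this
    refine this.congr fun t => ?_
    simp [Function.comp]

theorem ode_of {p : ℕ} {m0 m1 : ℝ} {u ut ur : ℝ → ℝ → ℝ} (H : Dat p m0 u ut ur) (h01 : m0 < m1)
    (hs : ∀ h r, |h| ≤ 1 → m1 < r → u h r = u 0 r) (r : ℝ) (hr : m1 + 1 < r) :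
    ut 0 r = 0 ∧ HasDerivAt (u 0) (ur 0 r) r ∧ HasDerivAt (ur 0) (-(3 / r * ur 0 r) - u 0 r ^ p) r := by
  have hz : ∀ s, |s| < 1 → ut s r = 0 := by
    intro s hs1
    have k := (H.cont_u s r (by linarith)).2.1
    have : HasDerivAt (fun t => u t r) 0 s := by
      refine (hasDerivAt_const s (u 0 r)).congr_of_eventuallyEq ?_
      have : ∀ᶠ t in nhds s, |t| < 1 := (continuous_abs.continuousAt).eventually (gt_mem_nhds hs1)
      filter_upwards [this] with t ht using hs t r ht.le (by linarith)
    exact k.unique this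
  obtain ⟨utt, utr, urr, h1, h2, h3, h4⟩ := H 0 r (by simp; linarith)
  have k2 := chain2 (f := ut) (T := fun s => s) (Rr := fun _ => r) (s := 0) (hasDerivAt_id 0) (hasDerivAt_const 0 r) h2
  have k3 := chain2 (f := ur) (T := fun _ => 0) (Rr := fun s => s) (s := r) (hasDerivAt_const r 0) (hasDerivAt_id r) h3
  have k0 : HasDerivAt (fun t => ut t r) 0 0 := by
    refine (hasDerivAt_const (0:ℝ) (0:ℝ)).congr_of_eventuallyEq ?_
    have : ∀ᶠ t in nhds (0:ℝ), |t| < 1 := (continuous_abs.continuousAt).eventually (gt_mem_nhds (by simp))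
    filter_upwards [this] with t ht using hz t ht
  have e := k2.unique k0
  have e' : utt = 0 := by linarith
  refine ⟨hz 0 (by simp), (H.cont_u 0 r (by simp; linarith)).1, k3.congr_deriv ?_⟩
  rw [e'] at h4
  linarith

theorem tail_one {f f' : ℝ → ℝ} {M K L : ℝ} {n : ℕ} (hn : 1 ≤ n) (hM : 0 < M) (hK : 0 ≤ K)
    (hf : ∀ r, M < r → HasDerivAt f (f' r) r) (hb : ∀ r, M < r → -(K / r ^ (n + 1)) ≤ f' r)
    (hl : Tendsto f atTop (nhds L)) (r : ℝ) (hr : M < r) : f r - L ≤ K / r ^ n := by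
  have hn' : (1:ℝ) ≤ n := by exact_mod_cast hn
  have hd : ∀ s, M < s → HasDerivAt (fun s => f s - K / s ^ n) (f' s + n * K / s ^ (n + 1)) s := by
    intro s hs
    have hs0 : 0 < s := by linarith
    have e := (hasDerivAt_const s K).fun_div (hasDerivAt_pow n s) (by positivity)
    refine ((hf s hs).fun_sub e).congr_deriv ?_
    obtain ⟨k, rfl⟩ : ∃ k, n = k + 1 := ⟨n - 1, by omega⟩
    simp only [Nat.add_sub_cancel]
    field_simp
    ring
  have hmono : MonotoneOn (fun s => f s - K / s ^ n) (Ioi M) := by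
    apply monotoneOn_of_deriv_nonneg (convex_Ioi M)
    · intro s hs; exact (hd s hs).continuousAt.continuousWithinAt
    · intro s hs; rw [interior_Ioi] at hs; exact (hd s hs).differentiableAt.differentiableWithinAt
    · intro s hs
      rw [interior_Ioi] at hs
      rw [(hd s hs).deriv]
      have hs0 : 0 < s := by have : M < s := hs; linarith
      have h1 := hb s hs
      have h2 : K / s ^ (n + 1) ≤ n * K / s ^ (n + 1) := by
        gcongr; nlinarith
      linarith
  have hlim : Tendsto (fun s => f s - K / s ^ n) atTop (nhds (L - 0)) :=
    hl.sub (tendsto_const_nhds.div_atTop (tendsto_pow_atTop (by omega)))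
  have : f r - K / r ^ n ≤ L - 0 := by
    refine ge_of_tendsto hlim ?_
    filter_upwards [eventually_ge_atTop r] with s hs
    exact hmono hr (lt_of_lt_of_le hr hs) hs
  linarith

theorem tail_abs {f f' : ℝ → ℝ} {M K L : ℝ} {n : ℕ} (hn : 1 ≤ n) (hM : 0 < M) (hK : 0 ≤ K)
    (hf : ∀ r, M < r → HasDerivAt f (f' r) r) (hb : ∀ r, M < r → |f' r| ≤ K / r ^ (n + 1))
    (hl : Tendsto f atTop (nhds L)) (r : ℝ) (hr : M < r) : |f r - L| ≤ K / r ^ n := by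
  rw [abs_le]
  have h1 := tail_one hn hM hK hf (fun r hr => (abs_le.1 (hb r hr)).1) hl r hr
  have h2 := tail_one hn hM hK (fun r hr => (hf r hr).fun_neg)
    (fun r hr => by have := (abs_le.1 (hb r hr)).2; linarith) hl.neg r hr
  constructor <;> linarith

theorem asym {p : ℕ} (hp : 5 ≤ p) {M ℓ : ℝ} {z q : ℝ → ℝ} (hM : 0 < M)
    (hz : ∀ r, M < r → HasDerivAt z (q r) r)
    (hq : ∀ r, M < r → HasDerivAt q (-(3 / r * q r) - z r ^ p) r)
    (hl : Tendsto (fun r => r ^ 2 * z r) atTop (nhds ℓ))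
    (hs : Tendsto (fun r => (2 * r * z r + r ^ 2 * q r) / r) atTop (nhds 0)) :
    ∃ C > 0, ∃ r₁, M < r₁ ∧ ∀ r, r₁ ≤ r → |r ^ 2 * z r - ℓ| ≤ C * r ^ ((4:ℝ) - 2 * (p:ℝ)) := by
  set B := |ℓ| + 1 with hB
  have hB0 : 0 < B := by positivity
  obtain ⟨M1, hM1⟩ := eventually_atTop.1 (((hl.abs).eventually (gt_mem_nhds (show |ℓ| < B by linarith))).and
    (eventually_gt_atTop M))
  have hMM : M < M1 := (hM1 M1 le_rfl).2
  have hzb : ∀ r, M1 < r → |z r| ≤ B / r ^ 2 := by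
    intro r hr
    have h := (hM1 r hr.le).1
    have hr0 : 0 < r := by linarith
    rw [abs_mul, abs_of_pos (by positivity : 0 < r ^ 2)] at h
    rw [le_div_iff₀ (by positivity)]
    linarith
  have hsb : ∀ r, M1 < r → |(2 * r * z r + r ^ 2 * q r) / r - 0| ≤ B ^ p / r ^ (2 * p - 2) := by
    refine tail_abs (f' := fun r => - r * z r ^ p) (by omega) (by linarith) (by positivity) ?_ ?_ hs
    · intro r hr
      have hr0 : 0 < r := by linarith
      have e1 := ((hasDerivAt_id r).const_mul 2).fun_mul (hz r (by linarith))
      have e2 := ((hasDerivAt_id r).fun_pow 2).fun_mul (hq r (by linarith))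
      refine ((e1.fun_add e2).fun_div (hasDerivAt_id r) hr0.ne').congr_deriv ?_
      simp only [id]
      field_simp
      push_cast
      ring
    · intro r hr
      have hr0 : 0 < r := by linarith
      rw [abs_mul, abs_neg, abs_of_pos hr0, abs_pow]
      calc r * |z r| ^ p ≤ r * (B / r ^ 2) ^ p := by gcongr; exact hzb r hr
        _ = B ^ p / r ^ (2 * p - 2 + 1) := by
          rw [div_pow, ← pow_mul, show 2 * p = (2 * p - 2 + 1) + 1 by omega, pow_succ]
          field_simp
          congr 2
  have hv : ∀ r, M1 < r → |r ^ 2 * z r - ℓ| ≤ B ^ p / r ^ (2 * p - 4) := by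
    refine tail_abs (f' := fun r => 2 * r * z r + r ^ 2 * q r) (by omega) (by linarith) (by positivity) ?_ ?_ hl
    · intro r hr
      refine (((hasDerivAt_id r).fun_pow 2).fun_mul (hz r (by linarith))).congr_deriv ?_
      simp
    · intro r hr
      have hr0 : 0 < r := by linarith
      have := hsb r hr
      rw [sub_zero, abs_div, abs_of_pos hr0, div_le_iff₀ hr0] at this
      refine this.trans (le_of_eq ?_)
      rw [show 2 * p - 2 = (2 * p - 4 + 1) + 1 by omega, pow_succ]
      field_simp
  refine ⟨B ^ p, by positivity, M1 + 1, by linarith, fun r hr => ?_⟩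
  have hr0 : 0 < r := by linarith
  refine (hv r (by linarith)).trans (le_of_eq ?_)
  rw [div_eq_mul_inv]
  congr 1
  rw [← Real.rpow_natCast, ← Real.rpow_neg hr0.le]
  congr 1
  rw [Nat.cast_sub (by omega)]
  push_cast
  ring

noncomputable def cl (K x : ℝ) : ℝ := max (-K) (min K x)

theorem cl_abs {K : ℝ} (hK : 0 ≤ K) (x : ℝ) : |cl K x| ≤ K := by
  rw [cl, abs_le]
  exact ⟨le_max_left _ _, max_le (by linarith) (min_le_left _ _)⟩

theorem cl_eq {K x : ℝ} (h : |x| ≤ K) : cl K x = x := by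
  rw [abs_le] at h
  rw [cl, min_eq_right h.2, max_eq_right h.1]

theorem cl_lip (K x y : ℝ) : |cl K x - cl K y| ≤ |x - y| := by
  have h1 := abs_max_sub_max_le_abs (min K x) (min K y) (-K)
  have h2 := abs_min_sub_min_le_max K x K y
  rw [sub_self, abs_zero, max_eq_right (abs_nonneg _)] at h2
  rw [cl, cl, max_comm (-K), max_comm (-K)]
  exact h1.trans h2

theorem cl_cont (K : ℝ) : Continuous (cl K) := by
  unfold cl; fun_prop

theorem cl_le {K : ℝ} (hK : 0 ≤ K) (x : ℝ) : |cl K x| ≤ |x| := by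
  have h0 : cl K 0 = 0 := cl_eq (by simpa using hK)
  have := cl_lip K x 0
  rwa [h0, sub_zero, sub_zero] at this

noncomputable def fld (p : ℕ) (K1 K2 r : ℝ) (x : ℝ × ℝ) : ℝ × ℝ := (cl K2 x.2 / r ^ 3, -(r ^ 3 * cl K1 x.1 ^ p))

theorem fld_lip {p : ℕ} {K1 K2 ε R r : ℝ} (hK1 : 0 ≤ K1) (hε : 0 < ε) (h1 : ε ≤ r) (h2 : r ≤ R) :
    LipschitzWith (Real.toNNReal (1 / ε ^ 3 + R ^ 3 * (p * K1 ^ (p - 1)))) (fld p K1 K2 r) := by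
  have hr : 0 < r := by linarith
  have hR : 0 < R := by linarith
  have hpos : 0 ≤ 1 / ε ^ 3 + R ^ 3 * (p * K1 ^ (p - 1)) := by positivity
  apply LipschitzWith.of_dist_le_mul
  intro x y
  rw [Real.coe_toNNReal _ hpos, Prod.dist_eq]
  have d1 : |x.1 - y.1| ≤ dist x y := by rw [Prod.dist_eq]; exact le_max_left _ _
  have d2 : |x.2 - y.2| ≤ dist x y := by rw [Prod.dist_eq]; exact le_max_right _ _
  have hd : 0 ≤ dist x y := dist_nonneg
  apply max_le
  · simp only [fld, Real.dist_eq]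
    rw [← sub_div, abs_div, abs_of_pos (by positivity : 0 < r ^ 3)]
    calc |cl K2 x.2 - cl K2 y.2| / r ^ 3 ≤ dist x y / ε ^ 3 := by
          gcongr; exact (cl_lip _ _ _).trans d2
      _ = 1 / ε ^ 3 * dist x y := by ring
      _ ≤ _ := by
          gcongr
          have : 0 ≤ R ^ 3 * (p * K1 ^ (p - 1)) := by positivity
          linarith
  · simp only [fld, Real.dist_eq]
    rw [show -(r ^ 3 * cl K1 x.1 ^ p) - -(r ^ 3 * cl K1 y.1 ^ p) = -(r ^ 3 * (cl K1 x.1 ^ p - cl K1 y.1 ^ p)) by ring,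
      abs_neg, abs_mul, abs_of_pos (by positivity : 0 < r ^ 3)]
    have h := abs_pow_sub_pow_le (cl K1 x.1) (cl K1 y.1) p
    have h' : |cl K1 x.1 ^ p - cl K1 y.1 ^ p| ≤ dist x y * p * K1 ^ (p - 1) := by
      refine h.trans ?_
      have h3 : max |cl K1 x.1| |cl K1 y.1| ≤ K1 := max_le (cl_abs hK1 _) (cl_abs hK1 _)
      have h4 : 0 ≤ max |cl K1 x.1| |cl K1 y.1| := (abs_nonneg _).trans (le_max_left _ _)
      have h5 := (cl_lip K1 x.1 y.1).trans d1
      gcongr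
    calc r ^ 3 * |cl K1 x.1 ^ p - cl K1 y.1 ^ p| ≤ R ^ 3 * (dist x y * p * K1 ^ (p - 1)) := by gcongr
      _ = R ^ 3 * (p * K1 ^ (p - 1)) * dist x y := by ring
      _ ≤ _ := by
          gcongr
          have : 0 ≤ 1 / ε ^ 3 := by positivity
          linarith

theorem clip_exists {p : ℕ} {K1 K2 ε R : ℝ} (hK1 : 0 ≤ K1) (hK2 : 0 ≤ K2) (hε : 0 < ε) (hR : ε ≤ R) (x0 : ℝ × ℝ) :
    ∃ y : ℝ → ℝ × ℝ, y R = x0 ∧ ∀ r ∈ Icc ε R, HasDerivWithinAt y (fld p K1 K2 r (y r)) (Icc ε R) r := by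
  have hR0 : 0 < R := by linarith
  set L := K2 / ε ^ 3 + R ^ 3 * K1 ^ p with hL
  have hL0 : 0 ≤ L := by positivity
  have P : IsPicardLindelof (fld p K1 K2) (tmin := ε) (tmax := R) ⟨R, hR, le_rfl⟩ x0
      (Real.toNNReal (L * R)) 0 (Real.toNNReal L) (Real.toNNReal (1 / ε ^ 3 + R ^ 3 * (p * K1 ^ (p - 1)))) := by
    refine ⟨fun t ht => (fld_lip hK1 hε ht.1 ht.2).lipschitzOnWith, fun x hx => ?_, fun t ht x hx => ?_, ?_⟩
    · unfold fld
      refine ContinuousOn.prodMk ?_ (by fun_prop)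
      intro r hr
      have : 0 < r := by linarith [hr.1]
      exact (continuousAt_const.div (by fun_prop) (by positivity)).continuousWithinAt
    · have ht0 : 0 < t := by linarith [ht.1]
      rw [Real.coe_toNNReal _ hL0, Prod.norm_def]
      have q1 : 0 ≤ K2 / ε ^ 3 := by positivity
      have q2 : 0 ≤ R ^ 3 * K1 ^ p := by positivity
      have c1 := cl_abs hK2 x.2
      have c2 := cl_abs hK1 x.1
      have t1 := ht.1
      have t2 := ht.2
      apply max_le
      · simp only [fld, Real.norm_eq_abs]
        rw [abs_div, abs_of_pos (by positivity : 0 < t ^ 3)]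
        have : |cl K2 x.2| / t ^ 3 ≤ K2 / ε ^ 3 := by gcongr
        linarith
      · simp only [fld, Real.norm_eq_abs]
        rw [abs_neg, abs_mul, abs_of_pos (by positivity : 0 < t ^ 3), abs_pow]
        have : t ^ 3 * |cl K1 x.1| ^ p ≤ R ^ 3 * K1 ^ p := by gcongr
        linarith
    · rw [Real.coe_toNNReal _ hL0, Real.coe_toNNReal _ (by positivity)]
      simp only [sub_self, NNReal.coe_zero, sub_zero]
      gcongr
      exact max_le (by linarith) (by linarith)
  obtain ⟨y, h1, h2⟩ := P.exists_eq_forall_mem_Icc_hasDerivWithinAt₀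
  exact ⟨y, h1, h2⟩

noncomputable def HH (p : ℕ) (K y : ℝ) : ℝ := ∫ s in (0:ℝ)..y, cl K s ^ p

theorem HH_deriv (p : ℕ) (K y : ℝ) : HasDerivAt (HH p K) (cl K y ^ p) y := by
  have hc : Continuous (fun s => cl K s ^ p) := (cl_cont K).pow p
  exact intervalIntegral.integral_hasDerivAt_right (hc.intervalIntegrable _ _)
    (hc.stronglyMeasurableAtFilter _ _) hc.continuousAt

theorem HH_nonneg {p : ℕ} (hodd : Odd p) {K : ℝ} (hK : 0 ≤ K) (y : ℝ) : 0 ≤ HH p K y := by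
  rcases le_total 0 y with h | h
  · apply intervalIntegral.integral_nonneg h
    intro s hs
    have : 0 ≤ cl K s := le_max_of_le_right (le_min hK hs.1)
    positivity
  · rw [HH, intervalIntegral.integral_symm, ← intervalIntegral.integral_neg]
    apply intervalIntegral.integral_nonneg h
    intro s hs
    have : cl K s ≤ 0 := max_le (by linarith) ((min_le_right _ _).trans hs.2)
    have := hodd.pow_nonpos this
    linarith

theorem HH_le {p : ℕ} {K : ℝ} (hK : 0 ≤ K) (y : ℝ) : HH p K y ≤ |y| ^ p * |y| := by
  have := intervalIntegral.norm_integral_le_of_norm_le_const (a := 0) (b := y) (f := fun s => cl K s ^ p) (C := |y| ^ p)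
    (fun s hs => by
      rw [Real.norm_eq_abs, abs_pow]
      have h1 := cl_le hK s
      have h2 : |s| ≤ |y| := by
        rcases le_total 0 y with h | h
        · rw [uIoc_of_le h] at hs
          rw [abs_of_nonneg hs.1.le, abs_of_nonneg h]; exact hs.2
        · rw [uIoc_of_ge h] at hs
          rw [abs_of_nonpos hs.2, abs_of_nonpos h]; linarith [hs.1]
      exact pow_le_pow_left₀ (abs_nonneg _) (h1.trans h2) p)
  rw [sub_zero] at this
  exact (le_abs_self _).trans this

theorem ext_bwd {p : ℕ} (hodd : Odd p) {ε R : ℝ} (hε : 0 < ε) (hR : ε < R) (A B : ℝ) :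
    ∃ y1 y2 : ℝ → ℝ, y1 R = A ∧ y2 R = B ∧ ∀ r ∈ Icc ε R,
      HasDerivWithinAt y1 (y2 r / r ^ 3) (Icc ε R) r ∧
      HasDerivWithinAt y2 (-(r ^ 3 * y1 r ^ p)) (Icc ε R) r := by
  have hR0 : 0 < R := by linarith
  set E1 := B ^ 2 / 2 + R ^ 6 * (|A| ^ p * |A|) with hE1
  have hE10 : 0 ≤ E1 := by positivity
  set S := 1 + 2 * E1 with hS
  set K1 := |A| + S / ε ^ 3 * R with hK1
  have hK10 : 0 ≤ K1 := by positivity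
  set K2 := |B| + R ^ 3 * K1 ^ p * R with hK2
  have hK20 : 0 ≤ K2 := by positivity
  obtain ⟨y, hy0, hy⟩ := clip_exists (p := p) hK10 hK20 hε hR.le (A, B)
  have hy1 : ∀ r ∈ Icc ε R, HasDerivWithinAt (fun r => (y r).1) (cl K2 (y r).2 / r ^ 3) (Icc ε R) r := fun r hr =>
    ((hasFDerivAt_fst (𝕜 := ℝ) (E := ℝ) (F := ℝ) (p := y r)).comp_hasDerivWithinAt r (hy r hr))
  have hy2 : ∀ r ∈ Icc ε R, HasDerivWithinAt (fun r => (y r).2) (-(r ^ 3 * cl K1 (y r).1 ^ p)) (Icc ε R) r := fun r hr =>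
    ((hasFDerivAt_snd (𝕜 := ℝ) (E := ℝ) (F := ℝ) (p := y r)).comp_hasDerivWithinAt r (hy r hr))
  have hRm : R ∈ Icc ε R := ⟨hR.le, le_rfl⟩
  have b2 : ∀ r ∈ Icc ε R, |(y r).2| ≤ K2 := by
    intro r hr
    have := (convex_Icc ε R).norm_image_sub_le_of_norm_hasDerivWithin_le (C := R ^ 3 * K1 ^ p) hy2 (fun s hs => by
      have s0 : 0 < s := by linarith [hs.1]
      rw [Real.norm_eq_abs, abs_neg, abs_mul, abs_of_pos (by positivity : 0 < s ^ 3), abs_pow]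
      have := cl_abs hK10 (y s).1
      have := hs.2
      gcongr) hRm hr
    simp only [hy0, Real.norm_eq_abs] at this
    have h2 : |r - R| ≤ R := by rw [abs_le]; constructor <;> linarith [hr.1, hr.2]
    have h3 := abs_sub_abs_le_abs_sub (y r).2 B
    have h4 : R ^ 3 * K1 ^ p * |r - R| ≤ R ^ 3 * K1 ^ p * R := by gcongr
    linarith
  have hmono : MonotoneOn (fun r => (y r).2 ^ 2 / 2 + r ^ 6 * HH p K1 (y r).1) (Icc ε R) := by
    have hd : ∀ r ∈ Icc ε R, HasDerivWithinAt (fun r => (y r).2 ^ 2 / 2 + r ^ 6 * HH p K1 (y r).1)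
        (6 * r ^ 5 * HH p K1 (y r).1) (Icc ε R) r := by
      intro r hr
      have r0 : 0 < r := by linarith [hr.1]
      have e1 := ((hy2 r hr).fun_pow 2).div_const 2
      have e2 := (HH_deriv p K1 (y r).1).comp_hasDerivWithinAt r (hy1 r hr)
      have e3 := (hasDerivAt_pow 6 r).hasDerivWithinAt (s := Icc ε R)
      refine (e1.fun_add (e3.fun_mul e2)).congr_deriv ?_
      rw [cl_eq (b2 r hr)]
      simp only [Function.comp]
      field_simp
      push_cast
      ring
    apply monotoneOn_of_deriv_nonneg (convex_Icc ε R)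
    · intro r hr; exact (hd r hr).continuousWithinAt
    · intro r hr
      exact ((hd r (interior_subset hr)).mono interior_subset).differentiableWithinAt
    · intro r hr
      have hr' := interior_subset hr
      have := (hd r hr').hasDerivAt (mem_interior_iff_mem_nhds.1 hr)
      rw [this.deriv]
      have r0 : 0 < r := by linarith [hr'.1]
      have := HH_nonneg hodd hK10 (y r).1
      positivity
  have bS : ∀ r ∈ Icc ε R, |(y r).2| ≤ S := by
    intro r hr
    have h1 := hmono hr hRm hr.2
    simp only [hy0] at h1
    have h2 := HH_nonneg hodd hK10 (y r).1
    have h3 := HH_le (p := p) hK10 A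
    have r0 : 0 < r := by linarith [hr.1]
    have h4 : 0 ≤ r ^ 6 * HH p K1 (y r).1 := by positivity
    have h5 : R ^ 6 * HH p K1 A ≤ R ^ 6 * (|A| ^ p * |A|) := by gcongr
    apply abs_le_of_sq_le_sq _ (by positivity)
    nlinarith
  have b1 : ∀ r ∈ Icc ε R, |(y r).1| ≤ K1 := by
    intro r hr
    have := (convex_Icc ε R).norm_image_sub_le_of_norm_hasDerivWithin_le (C := S / ε ^ 3) hy1 (fun s hs => by
      have s0 : 0 < s := by linarith [hs.1]
      rw [cl_eq (b2 s hs), Real.norm_eq_abs, abs_div, abs_of_pos (by positivity : 0 < s ^ 3)]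
      have := bS s hs
      have := hs.1
      gcongr) hRm hr
    simp only [hy0, Real.norm_eq_abs] at this
    have h2 : |r - R| ≤ R := by rw [abs_le]; constructor <;> linarith [hr.1, hr.2]
    have h3 := abs_sub_abs_le_abs_sub (y r).1 A
    have h4 : S / ε ^ 3 * |r - R| ≤ S / ε ^ 3 * R := by gcongr
    linarith
  refine ⟨fun r => (y r).1, fun r => (y r).2, by simp [hy0], by simp [hy0], fun r hr => ⟨?_, ?_⟩⟩
  · have := hy1 r hr
    rwa [cl_eq (b2 r hr)] at this
  · have := hy2 r hr
    rwa [cl_eq (b1 r hr)] at this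

def Sol (p : ℕ) (c : ℝ) (z q : ℝ → ℝ) : Prop :=
  ∀ r, c < r → HasDerivAt z (q r / r ^ 3) r ∧ HasDerivAt q (-(r ^ 3 * z r ^ p)) r

theorem glue {c M R : ℝ} {f g d e : ℝ → ℝ} (hc : c < R) (hM : M < R)
    (hf : ∀ r ∈ Icc c R, HasDerivWithinAt f (d r) (Icc c R) r) (hg : ∀ r, M < r → HasDerivAt g (e r) r)
    (h1 : f R = g R) (h2 : d R = e R) (r : ℝ) (hr : c < r) :
    HasDerivAt (fun r => if r ≤ R then f r else g r) (if r ≤ R then d r else e r) r := by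
  rcases lt_trichotomy r R with h | h | h
  · rw [if_pos h.le]
    have := (hf r ⟨hr.le, h.le⟩).hasDerivAt (Icc_mem_nhds hr h)
    refine this.congr_of_eventuallyEq ?_
    filter_upwards [Iio_mem_nhds h] with s hs
    rw [if_pos (le_of_lt hs)]
  · subst h
    rw [if_pos le_rfl]
    have k1 : HasDerivWithinAt (fun s => if s ≤ r then f s else g s) (d r) (Iic r) r := by
      have := (hf r ⟨hr.le, le_rfl⟩).mono_of_mem_nhdsWithin (Icc_mem_nhdsLE hr)
      refine this.congr (fun s hs => ?_) ?_
      · rw [if_pos (show s ≤ r from hs)]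
      · rw [if_pos le_rfl]
    have k2 : HasDerivWithinAt (fun s => if s ≤ r then f s else g s) (d r) (Ici r) r := by
      rw [h2]
      refine (hg r hM).hasDerivWithinAt.congr (fun s hs => ?_) ?_
      · by_cases hsr : s ≤ r
        · have : s = r := le_antisymm hsr hs
          rw [if_pos hsr, this, h1]
        · rw [if_neg hsr]
      · rw [if_pos le_rfl, h1]
    have := k1.union k2
    rwa [Iic_union_Ici, hasDerivWithinAt_univ] at this
  · rw [if_neg (not_le.2 h)]
    refine (hg r (by linarith)).congr_of_eventuallyEq ?_
    filter_upwards [Ioi_mem_nhds h] with s hs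
    rw [if_neg (not_le.2 hs)]

theorem sol_ext {p : ℕ} (hodd : Odd p) {M R c : ℝ} {z q : ℝ → ℝ} (hS : Sol p M z q) (hM : M < R)
    (hc : 0 < c) (hcR : c < R) : ∃ z1 q1, Sol p c z1 q1 ∧ ∀ r, R ≤ r → z1 r = z r ∧ q1 r = q r := by
  obtain ⟨y1, y2, h1, h2, h3⟩ := ext_bwd hodd hc hcR (z R) (q R)
  refine ⟨fun r => if r ≤ R then y1 r else z r, fun r => if r ≤ R then y2 r else q r, fun r hr => ⟨?_, ?_⟩, ?_⟩
  · refine (glue hcR hM (fun r hr => (h3 r hr).1) (fun r hr => (hS r hr).1) h1 (by rw [h2]) r hr).congr_deriv ?_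
    by_cases h : r ≤ R <;> simp [h]
  · refine (glue hcR hM (fun r hr => (h3 r hr).2) (fun r hr => (hS r hr).2) h2 (by rw [h1]) r hr).congr_deriv ?_
    by_cases h : r ≤ R <;> simp [h]
  · intro r hr
    by_cases h : r ≤ R
    · have : r = R := le_antisymm h hr
      subst this
      simp [h1, h2]
    · simp [h]

theorem sol_uniq {p : ℕ} {c R : ℝ} {z q z' q' : ℝ → ℝ} (hc : 0 < c) (hS : Sol p c z q) (hS' : Sol p c z' q')
    (h1 : z R = z' R) (h2 : q R = q' R) (r : ℝ) (hr : c < r) (hrR : r ≤ R) : z r = z' r ∧ q r = q' r := by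
  have cb : ∀ f : ℝ → ℝ, (∀ s ∈ Icc r R, ContinuousAt f s) → ∃ K, ∀ s ∈ Icc r R, |f s| ≤ K := by
    intro f hf
    obtain ⟨K, hK⟩ := isCompact_Icc.exists_bound_of_continuousOn
      (fun s hs => (hf s hs).continuousWithinAt : ContinuousOn f (Icc r R))
    exact ⟨K, hK⟩
  have hm : ∀ s ∈ Icc r R, c < s := fun s hs => by linarith [hs.1]
  obtain ⟨A, hA⟩ := cb z (fun s hs => (hS s (hm s hs)).1.continuousAt)
  obtain ⟨B, hB⟩ := cb q (fun s hs => (hS s (hm s hs)).2.continuousAt)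
  obtain ⟨A', hA'⟩ := cb z' (fun s hs => (hS' s (hm s hs)).1.continuousAt)
  obtain ⟨B', hB'⟩ := cb q' (fun s hs => (hS' s (hm s hs)).2.continuousAt)
  have hrm : r ∈ Icc r R := ⟨le_rfl, hrR⟩
  set K1 := max A A' with hK1
  set K2 := max B B' with hK2
  have hK10 : 0 ≤ K1 := (abs_nonneg _).trans ((hA r hrm).trans (le_max_left _ _))
  have hr0 : 0 < r := by linarith
  have d1 : ∀ s ∈ Icc r R, HasDerivAt (fun s => (z s, q s)) (fld p K1 K2 s (z s, q s)) s := by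
    intro s hs
    have := (hS s (hm s hs)).1.prodMk (hS s (hm s hs)).2
    simp only [fld]
    rwa [cl_eq ((hA s hs).trans (le_max_left _ _)), cl_eq ((hB s hs).trans (le_max_left _ _))]
  have d2 : ∀ s ∈ Icc r R, HasDerivAt (fun s => (z' s, q' s)) (fld p K1 K2 s (z' s, q' s)) s := by
    intro s hs
    have := (hS' s (hm s hs)).1.prodMk (hS' s (hm s hs)).2
    simp only [fld]
    rwa [cl_eq ((hA' s hs).trans (le_max_right _ _)), cl_eq ((hB' s hs).trans (le_max_right _ _))]
  have := ODE_solution_unique_of_mem_Icc_left (s := fun _ => univ) (v := fld p K1 K2)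
    (fun t ht => (fld_lip hK10 hr0 ht.1.le ht.2).lipschitzOnWith)
    (fun s hs => (d1 s hs).continuousAt.continuousWithinAt)
    (fun s hs => (d1 s ⟨hs.1.le, hs.2⟩).hasDerivWithinAt) (fun _ _ => trivial)
    (fun s hs => (d2 s hs).continuousAt.continuousWithinAt)
    (fun s hs => (d2 s ⟨hs.1.le, hs.2⟩).hasDerivWithinAt) (fun _ _ => trivial)
    (by simp only [h1, h2]) hrm
  exact ⟨congrArg Prod.fst this, congrArg Prod.snd this⟩

theorem sol_global {p : ℕ} (hodd : Odd p) {M R : ℝ} {z q : ℝ → ℝ} (hR0 : 0 < R) (hS : Sol p M z q) (hM : M < R) :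
    ∃ Z Q, Sol p 0 Z Q ∧ ∀ r, R ≤ r → Z r = z r := by
  have hex : ∀ c : ℝ, ∃ z1 q1 : ℝ → ℝ, 0 < c → c < R → (Sol p c z1 q1 ∧ ∀ r, R ≤ r → z1 r = z r ∧ q1 r = q r) := by
    intro c
    by_cases h : 0 < c ∧ c < R
    · obtain ⟨z1, q1, h1⟩ := sol_ext hodd hS hM h.1 h.2
      exact ⟨z1, q1, fun _ _ => h1⟩
    · exact ⟨z, q, fun h1 h2 => absurd ⟨h1, h2⟩ h⟩
  choose z1 q1 hzq using hex
  have agree : ∀ c, 0 < c → c < R → ∀ r, c < r →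
      z1 (min r R / 2) r = z1 c r ∧ q1 (min r R / 2) r = q1 c r := by
    intro c hc hcR r hr
    have m1 : min r R ≤ r := min_le_left _ _
    have m2 : min r R ≤ R := min_le_right _ _
    have m3 : 0 < min r R := lt_min (by linarith) hR0
    obtain ⟨s1, e1⟩ := hzq c hc hcR
    obtain ⟨s2, e2⟩ := hzq (min r R / 2) (by linarith) (by linarith)
    rcases le_total R r with h | h
    · rw [(e1 r h).1, (e1 r h).2, (e2 r h).1, (e2 r h).2]; exact ⟨rfl, rfl⟩
    · refine sol_uniq (c := max c (min r R / 2)) (lt_max_of_lt_left hc)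
        (fun s hs => s2 s (lt_of_le_of_lt (le_max_right _ _) hs))
        (fun s hs => s1 s (lt_of_le_of_lt (le_max_left _ _) hs)) ?_ ?_ r (max_lt hr (by linarith)) h
      · rw [(e1 R le_rfl).1, (e2 R le_rfl).1]
      · rw [(e1 R le_rfl).2, (e2 R le_rfl).2]
  refine ⟨fun r => z1 (min r R / 2) r, fun r => q1 (min r R / 2) r, fun r hr => ?_, fun r hr => ?_⟩
  · have m1 : min r R ≤ r := min_le_left _ _
    have m2 : min r R ≤ R := min_le_right _ _
    have m3 : 0 < min r R := lt_min hr hR0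
    set c := min r R / 2 with hc
    have hc0 : 0 < c := by linarith
    have hcR : c < R := by linarith
    have hcr : c < r := by linarith
    obtain ⟨s1, -⟩ := hzq c hc0 hcR
    obtain ⟨k1, k2⟩ := s1 r hcr
    constructor
    · refine k1.congr_of_eventuallyEq ?_
      filter_upwards [Ioi_mem_nhds hcr] with s hs using (agree c hc0 hcR s hs).1
    · refine k2.congr_of_eventuallyEq ?_
      filter_upwards [Ioi_mem_nhds hcr] with s hs using (agree c hc0 hcR s hs).2
  · have m1 : min r R ≤ r := min_le_left _ _
    have m2 : min r R ≤ R := min_le_right _ _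
    have m3 : 0 < min r R := lt_min (by linarith) hR0
    exact ((hzq (min r R / 2) (by linarith) (by linarith)).2 r hr).1

theorem sol_final {p : ℕ} (hodd : Odd p) {Z Q : ℝ → ℝ} (h : Sol p 0 Z Q) :
    ContDiffOn ℝ 2 Z (Ioi (0:ℝ)) ∧
      (∀ r : ℝ, 0 < r →
        deriv (deriv Z) r + (3 / r) * deriv Z r + |Z r| ^ (p - 1) * Z r = 0) := by
  have hd : ∀ r, 0 < r → deriv Z r = Q r / r ^ 3 := fun r hr => (h r hr).1.deriv
  have hd2 : ∀ r, 0 < r → HasDerivAt (deriv Z) (-(Z r ^ p) - 3 * Q r / r ^ 4) r := by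
    intro r hr
    have e := (h r hr).2.fun_div (hasDerivAt_pow 3 r) (by positivity)
    refine (e.congr_of_eventuallyEq ?_).congr_deriv ?_
    · filter_upwards [Ioi_mem_nhds hr] with s hs using hd s hs
    · push_cast
      field_simp
  constructor
  · rw [show (2 : WithTop ℕ∞) = 1 + 1 by norm_num, contDiffOn_succ_iff_deriv_of_isOpen isOpen_Ioi]
    refine ⟨fun r hr => (h r hr).1.differentiableAt.differentiableWithinAt, by simp, ?_⟩
    rw [show (1 : WithTop ℕ∞) = 0 + 1 by norm_num, contDiffOn_succ_iff_deriv_of_isOpen isOpen_Ioi]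
    refine ⟨fun r hr => (hd2 r hr).differentiableAt.differentiableWithinAt, by simp, ?_⟩
    rw [contDiffOn_zero]
    have : ContinuousOn (fun r => -(Z r ^ p) - 3 * Q r / r ^ 4) (Ioi 0) := by
      intro r hr
      have hr' : 0 < r := hr
      have c1 := (h r hr').1.continuousAt
      have c2 := (h r hr').2.continuousAt
      exact (((c1.pow p).neg).sub ((continuousAt_const.mul c2).div (by fun_prop) (by positivity))).continuousWithinAt
    exact this.congr fun r hr => (hd2 r hr).deriv
  · intro r hr
    rw [(hd2 r hr).deriv, hd r hr]
    have e5 : |Z r| ^ (p - 1) * Z r = Z r ^ p := by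
      obtain ⟨k, hk⟩ := hodd
      rw [hk, show 2 * k + 1 - 1 = 2 * k by omega, pow_mul, sq_abs, ← pow_mul, ← pow_succ]
    rw [e5]
    field_simp
    ring

/-- dichotomy for non-radiative exterior solutions: either the solution
vanishes at some time `t₀` outside `{r > |t₀| + R}`, or the data agrees for large `r`
with `(Z_ℓ, 0)` for a singular stationary solution `Z_ℓ`. -/
theorem stmt9 (p : ℕ) (hodd : Odd p) (hp5 : 5 ≤ p) (R₀ C₀ : ℝ) (hR₀ : 0 < R₀) (hC₀ : 0 < C₀)
    (u : ℝ → ℝ → ℝ)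
    (hsol : IsExtSol p 2 R₀ u)
    (hdata : eH R₀ (u 0) (fun r => dtu u 0 r) < ⊤)
    (hbd : ∀ ρ : ℝ, R₀ ≤ ρ →
      eLL 2 8 ρ u + eLL 3 6 ρ u + supH ρ u
        ≤ ENNReal.ofReal C₀ * eH ρ (u 0) (fun r => dtu u 0 r))
    (hvan : ExtEnergyVanishes R₀ u) :
    (∃ t₀ R : ℝ, R₀ < R ∧ ∀ r : ℝ, |t₀| + R < r → u t₀ r = 0) ∨
    (∃ ℓ : ℝ, ℓ ≠ 0 ∧ ∃ R : ℝ, R₀ < R ∧ ∃ Z : ℝ → ℝ,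
      ContDiffOn ℝ 2 Z (Ioi (0:ℝ)) ∧
      (∀ r : ℝ, 0 < r →
        deriv (deriv Z) r + (3 / r) * deriv Z r + |Z r| ^ (p - 1) * Z r = 0) ∧
      (∃ C > (0:ℝ), ∃ r₁ : ℝ, ∀ r : ℝ, r₁ ≤ r →
        |r ^ 2 * Z r - ℓ| ≤ C * r ^ ((4:ℝ) - 2 * (p:ℝ))) ∧
      (∀ r : ℝ, R < r → u 0 r = Z r ∧ dtu u 0 r = 0)) := by
  have H := dat_of_sol hodd hsol
  obtain ⟨m0, h1, h2, hu, hP⟩ := main_bound hp5 hR₀ H hdata hbd hvan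
  have H0 := H.mono h2.le
  obtain ⟨m1, h01, hs⟩ := stat hp5 h1 H0 hu hP
  obtain ⟨ℓ, hℓ⟩ := vlim h1 H0 hP
  by_cases hz : ℓ = 0
  · left
    rw [hz] at hℓ
    obtain ⟨m2, h02, hzero⟩ := zero_case hp5 h1 H0 hu hP hℓ
    exact ⟨0, m2, by linarith, fun r hr => hzero r (by simpa using hr)⟩
  · right
    have hode := ode_of H0 h01 hs
    have hM : 0 < m1 + 1 := by linarith
    have hslope : Tendsto (fun r => (2 * r * u 0 r + r ^ 2 * deriv (u 0) r) / r) atTop (nhds 0) := by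
      have hlim : Tendsto (fun t : ℝ => 44 / t ^ 2) atTop (nhds 0) :=
        tendsto_const_nhds.div_atTop (tendsto_pow_atTop (by norm_num))
      refine squeeze_zero_norm' ?_ hlim
      filter_upwards [eventually_gt_atTop m0] with r hr
      have hr0 : 0 < r := by linarith
      have hb := hP r hr r r le_rfl le_rfl
      have e : 2 * r * u 0 r + r ^ 2 * deriv (u 0) r = aa u (dtu u) (fun t r => deriv (u t) r) r r +
          bb u (dtu u) (fun t r => deriv (u t) r) r r := by
        simp only [aa, bb]
        rw [show (r - r) / 2 = 0 by ring, show (r + r) / 2 = r by ring]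
        ring
      rw [e, Real.norm_eq_abs, abs_div, abs_of_pos hr0]
      have h3 := abs_add_le (aa u (dtu u) (fun t r => deriv (u t) r) r r) (bb u (dtu u) (fun t r => deriv (u t) r) r r)
      have h4 : (44:ℝ) / r ^ 2 = 22 / r ^ 2 + 22 / r ^ 2 := by ring
      have h5 : (0:ℝ) ≤ 44 / r ^ 2 := by positivity
      rw [div_le_iff₀ hr0]
      nlinarith [hb.1, hb.2]
    obtain ⟨C, hC, r₁, hr₁, has⟩ := asym hp5 hM (fun r hr => (hode r hr).2.1) (fun r hr => (hode r hr).2.2) hℓ hslope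
    have hS : Sol p (m1 + 1) (u 0) (fun r => r ^ 3 * deriv (u 0) r) := by
      intro r hr
      have hr0 : 0 < r := by linarith
      constructor
      · refine (hode r hr).2.1.congr_deriv ?_
        field_simp
      · refine ((hasDerivAt_pow 3 r).fun_mul (hode r hr).2.2).congr_deriv ?_
        push_cast
        field_simp
        ring
    obtain ⟨Z, Q, hZ, hZe⟩ := sol_global (R := m1 + 2) hodd (by linarith) hS (by linarith)
    obtain ⟨hZ1, hZ2⟩ := sol_final hodd hZ
    refine ⟨ℓ, hz, m1 + 2, by linarith, Z, hZ1, hZ2, ⟨C, hC, max r₁ (m1 + 2), fun r hr => ?_⟩, fun r hr => ⟨?_, ?_⟩⟩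
    · rw [hZe r ((le_max_right _ _).trans hr)]
      exact has r ((le_max_left _ _).trans hr)
    · exact (hZe r hr.le).symm
    · exact (hode r (by linarith)).1
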